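/- arXiv:math/9909053 — 3 statements merged into one kernel-verified Lean document; each statement's English description precedes it below -/
import Mathlib

section
/- (Theorem 5.2, stated with q replaced by q^2 and a replaced by a^2 to avoid half-integer powers.) Let q, a be complex numbers with 0 < |q| < 1 and a^2 q^{2m} ≠ 1 for all m ≥ 1, and let k ≥ 2 and 1 ≤ i ≤ k be integers. Then the following three expressions are equal: (1) ((-a q^2; q^2)_∞ / (a^2 q^2; q^2)_∞) · ∑_{n=0}^{∞} (-1)^n a^{(2k-1)n} q^{2kn^2 + (2k-2i)n} (1 - a^{2i} q^{2i(2n+1)}) · (a^2 q^2; q^2)_n / (q^2;q^2)_n; (2) (-a q^2; q^2)_∞ · ∑_{s_1 ≥ ⋯ ≥ s_{k-1} ≥ 0} a^{2(s_1 + ⋯ + s_{k-1})} q^{2(s_1^2 + ⋯ + s_{k-1}^2) + 2(s_i + ⋯ + s_{k-1})} / [(q^2;q^2)_{s_1-s_2} ⋯ (q^2;q^2)_{s_{k-1}} (-a q^2; q^2)_{s_{k-1}}]; (3) ∑_{s_1 ≥ ⋯ ≥ s_{2k-2} ≥ 0} a^{s_1 + s_2 + ⋯ + s_{2k-2}} q^{s_1^2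 + ⋯ + s_{2k-2}^2 + 2(s_{2i} + s_{2i+2} + ⋯ + s_{2k-2}) + S} / [(q^2;q^2)_{s_1-s_2} (q^2;q^2)_{s_2-s_3} ⋯ (q^2;q^2)_{s_{2k-2}}], where S = s_1 - s_2 + s_3 - s_4 + ⋯ + s_{2k-3} - s_{2k-2}, the term 2(s_i + ⋯ + s_{k-1}) in (2) is empty when i = k, and the term 2(s_{2i} + s_{2i+2} + ⋯ + s_{2k-2}) in (3) is the sum over even indices from 2i to 2k-2. -/
/-- The finite q-Pochhammer symbol `(x;q)_n = ∏_{j=0}^{n-1} (1 - x q^j)`. -/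
noncomputable def qPoch (x q : ℂ) (n : ℕ) : ℂ := ∏ j ∈ Finset.range n, (1 - x * q ^ j)

/-- The infinite q-Pochhammer symbol `(x;q)_∞ = ∏_{j=0}^{∞} (1 - x q^j)`. -/
noncomputable def qPochInf (x q : ℂ) : ℂ := ∏' j : ℕ, (1 - x * q ^ j)

namespace T52

open Finset

lemma qPoch_zero (x q : ℂ) : qPoch x q 0 = 1 := by simp [qPoch]

lemma qPoch_succ (x q : ℂ) (n : ℕ) : qPoch x q (n + 1) = qPoch x q n * (1 - x * q ^ n) := by
  simp [qPoch, prod_range_succ]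

lemma qPoch_succ' (x q : ℂ) (n : ℕ) : qPoch x q (n + 1) = (1 - x) * qPoch (x * q) q n := by
  simp only [qPoch, prod_range_succ']
  rw [mul_comm]
  congr 1
  · simp
  · apply prod_congr rfl; intro j _; ring

lemma qPoch_add (x q : ℂ) (m n : ℕ) :
    qPoch x q (m + n) = qPoch x q m * qPoch (x * q ^ m) q n := by
  simp only [qPoch, prod_range_add]
  congr 1
  apply prod_congr rfl; intro j _; ring

lemma qPoch_ne {B Q : ℂ} (hB : ∀ m : ℕ, 1 ≤ m → B * Q ^ m ≠ 1) (n : ℕ) :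
    qPoch (B * Q) Q n ≠ 0 := by
  rw [qPoch, prod_ne_zero_iff]
  intro j _ h
  apply hB (j + 1) (by omega)
  rw [sub_eq_zero] at h
  rw [h]; ring

lemma one_sub_ne {B Q : ℂ} (hB : ∀ m : ℕ, 1 ≤ m → B * Q ^ m ≠ 1) (n : ℕ) :
    1 - B * Q ^ (n + 1) ≠ 0 := by
  intro h
  rw [sub_eq_zero] at h
  exact hB (n + 1) (by omega) h.symm

lemma qPochQ_ne {Q : ℂ} (hQ : ∀ m : ℕ, 1 ≤ m → Q ^ m ≠ 1) (n : ℕ) : qPoch Q Q n ≠ 0 := by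
  have := qPoch_ne (B := 1) (Q := Q) (by simpa using hQ) n
  simpa using this

lemma one_sub_Q_ne {Q : ℂ} (hQ : ∀ m : ℕ, 1 ≤ m → Q ^ m ≠ 1) (n : ℕ) : 1 - Q ^ (n + 1) ≠ 0 := by
  have := one_sub_ne (B := 1) (Q := Q) (by simpa using hQ) n
  simpa using this

/-- The kernel `1/(Q;Q)_{L-m}`, zero if `m > L`. -/
noncomputable def K (Q : ℂ) (L m : ℕ) : ℂ := if m ≤ L then (qPoch Q Q (L - m))⁻¹ else 0

lemma K_zero {Q : ℂ} {L m : ℕ} (h : L < m) : K Q L m = 0 := by simp [K, h]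

lemma K_add (Q : ℂ) (r d : ℕ) : K Q (r + d) r = (qPoch Q Q d)⁻¹ := by simp [K]

lemma K_le {Q : ℂ} {L m : ℕ} (h : m ≤ L) : K Q L m = (qPoch Q Q (L - m))⁻¹ := by simp [K, h]

/-- Symmetric kernel. -/
noncomputable def c (Q : ℂ) (N j : ℕ) : ℂ := K Q N j * (qPoch Q Q j)⁻¹

lemma pascal {Q : ℂ} (hQ : ∀ m : ℕ, 1 ≤ m → Q ^ m ≠ 1) {N j : ℕ} (h : j ≤ N) :
    (1 - Q ^ (N + 1)) * c Q (N + 1) (j + 1) = c Q N (j + 1) + Q ^ (N - j) * c Q N j := by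
  obtain ⟨d, rfl⟩ := Nat.exists_eq_add_of_le h
  have e1 : K Q (j + d + 1) (j + 1) = (qPoch Q Q d)⁻¹ := by
    rw [show j + d + 1 = (j + 1) + d by ring, K_add]
  have h1 := qPochQ_ne hQ j
  have h2 := qPochQ_ne hQ d
  have h3 := one_sub_Q_ne hQ j
  rw [show Q ^ (j + 1) = Q * Q ^ j by ring] at h3
  simp only [c, e1, K_add, qPoch_succ, Nat.add_sub_cancel_left]
  rcases d with _ | d
  · rw [K_zero (by omega)]
    simp only [qPoch_zero]
    field_simp
    ring
  · have e2 : K Q (j + (d + 1)) (j + 1) = (qPoch Q Q d)⁻¹ := by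
      rw [show j + (d + 1) = (j + 1) + d by ring, K_add]
    have h4 := qPochQ_ne hQ d
    have h5 := one_sub_Q_ne hQ d
    rw [show Q ^ (d + 1) = Q * Q ^ d by ring] at h5
    rw [e2, qPoch_succ]
    field_simp
    ring

lemma c_zero {Q : ℂ} (hQ : ∀ m : ℕ, 1 ≤ m → Q ^ m ≠ 1) (N : ℕ) :
    (1 - Q ^ (N + 1)) * c Q (N + 1) 0 = c Q N 0 := by
  have h4 := qPochQ_ne hQ N
  have h5 := one_sub_Q_ne hQ N
  rw [show Q ^ (N + 1) = Q * Q ^ N by ring] at *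
  simp [c, K, qPoch_succ]
  field_simp

lemma pascal_sum {Q : ℂ} (hQ : ∀ m : ℕ, 1 ≤ m → Q ^ m ≠ 1) (N : ℕ) (f : ℕ → ℂ) :
    (1 - Q ^ (N + 1)) * ∑ j ∈ range (N + 2), c Q (N + 1) j * f j =
      ∑ j ∈ range (N + 1), c Q N j * (f j + Q ^ (N - j) * f (j + 1)) := by
  rw [sum_range_succ', mul_add, mul_sum, ← mul_assoc, c_zero hQ]
  have : ∑ j ∈ range (N + 1), c Q N j * f j =
      ∑ j ∈ range (N + 1), c Q N (j + 1) * f (j + 1) + c Q N 0 * f 0 := by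
    rw [← sum_range_succ' (fun j => c Q N j * f j), sum_range_succ _ (N + 1)]
    simp [c, K_zero]
  simp only [mul_add, sum_add_distrib]
  rw [this, add_right_comm, add_left_inj, ← sum_add_distrib]
  apply sum_congr rfl
  intro j hj
  rw [← mul_assoc, pascal hQ (by simpa [Nat.lt_succ_iff] using hj)]
  ring

lemma vander {Q : ℂ} (hQ : ∀ m : ℕ, 1 ≤ m → Q ^ m ≠ 1) (N : ℕ) :
    ∀ B : ℂ, (∀ m : ℕ, 1 ≤ m → B * Q ^ m ≠ 1) →
    ∑ j ∈ range (N + 1), c Q N j * (B ^ j * Q ^ (j ^ 2) * (qPoch (B * Q) Q j)⁻¹) =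
      (qPoch Q Q N)⁻¹ * (qPoch (B * Q) Q N)⁻¹ := by
  induction N with
  | zero => intro B hB; simp [c, K, qPoch_zero]
  | succ N ih =>
    intro B hB
    have hBQ : ∀ m : ℕ, 1 ≤ m → B * Q * Q ^ m ≠ 1 := by
      intro m hm
      have := hB (m + 1) (by omega)
      rwa [show B * Q * Q ^ m = B * Q ^ (m + 1) by ring]
    apply mul_left_cancel₀ (one_sub_Q_ne hQ N)
    rw [pascal_sum hQ]
    simp only [mul_add, sum_add_distrib]
    have h0 : 1 - B * Q ≠ 0 := by simpa using one_sub_ne hB 0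
    have e : ∀ j ∈ range (N + 1), c Q N j * (Q ^ (N - j) * (B ^ (j + 1) * Q ^ ((j + 1) ^ 2) *
        (qPoch (B * Q) Q (j + 1))⁻¹)) = B * Q ^ (N + 1) * (1 - B * Q)⁻¹ *
        (c Q N j * ((B * Q) ^ j * Q ^ (j ^ 2) * (qPoch (B * Q * Q) Q j)⁻¹)) := by
      intro j hj
      have hj' : j ≤ N := by simpa [Nat.lt_succ_iff] using hj
      obtain ⟨d, rfl⟩ := Nat.exists_eq_add_of_le hj'
      rw [qPoch_succ', mul_inv, Nat.add_sub_cancel_left]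
      ring
    rw [sum_congr rfl e, ← mul_sum, ih B hB, ih (B * Q) hBQ]
    have e2 : qPoch (B * Q * Q) Q N = qPoch (B * Q) Q (N + 1) * (1 - B * Q)⁻¹ := by
      rw [qPoch_succ']; field_simp
    have e3 := qPoch_succ (B * Q) Q N
    have h3 := qPoch_ne hB N
    have h4 := one_sub_ne hB N
    have h5 := qPochQ_ne hQ N
    have h6 := one_sub_Q_ne hQ N
    rw [e2, e3, qPoch_succ Q]
    rw [show B * Q ^ (N + 1) = B * Q * Q ^ N by ring] at *
    rw [show Q ^ (N + 1) = Q * Q ^ N by ring] at *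
    field_simp
    ring

lemma shift_sum (Q : ℂ) (r N : ℕ) (f : ℕ → ℂ) :
    ∑ m ∈ range (r + N + 1), K Q (r + N) m * f m * K Q m r =
      ∑ j ∈ range (N + 1), c Q N j * f (r + j) := by
  rw [add_assoc, sum_range_add, sum_eq_zero, zero_add]
  · apply sum_congr rfl
    intro j _
    rw [K_add, c]
    have : K Q (r + N) (r + j) = K Q N j := by
      simp [K, Nat.add_sub_add_left]
    rw [this]; ring
  · intro m hm
    rw [K_zero (L := m) (m := r) (by simpa using hm), mul_zero]

/-- Bailey kernel. -/
noncomputable def u (Q A : ℂ) (r L : ℕ) : ℂ := K Q L r * (qPoch (A * Q) Q (L + r))⁻¹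

lemma bailey {Q A : ℂ} (hQ : ∀ m : ℕ, 1 ≤ m → Q ^ m ≠ 1) (hA : ∀ m : ℕ, 1 ≤ m → A * Q ^ m ≠ 1)
    (r L : ℕ) :
    ∑ m ∈ range (L + 1), K Q L m * (A ^ m * Q ^ (m ^ 2)) * u Q A r m =
      A ^ r * Q ^ (r ^ 2) * u Q A r L := by
  by_cases h : r ≤ L
  · obtain ⟨N, rfl⟩ := Nat.exists_eq_add_of_le h
    have hB : ∀ m : ℕ, 1 ≤ m → A * Q ^ (2 * r) * Q ^ m ≠ 1 := by
      intro m hm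
      have := hA (2 * r + m) (by omega)
      rwa [mul_assoc, ← pow_add]
    have := shift_sum Q r N (fun m => A ^ m * Q ^ (m ^ 2) * (qPoch (A * Q) Q (m + r))⁻¹)
    have e : ∀ j, qPoch (A * Q) Q (r + j + r) =
        qPoch (A * Q) Q (2 * r) * qPoch (A * Q ^ (2 * r) * Q) Q j := by
      intro j
      rw [show r + j + r = 2 * r + j by ring, qPoch_add]
      congr 2; ring
    calc _ = ∑ m ∈ range (r + N + 1), K Q (r + N) m * (A ^ m * Q ^ (m ^ 2) *
          (qPoch (A * Q) Q (m + r))⁻¹) * K Q m r := by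
          apply sum_congr rfl; intro m _; rw [u]; ring
      _ = _ := this
      _ = A ^ r * Q ^ (r ^ 2) * (qPoch (A * Q) Q (2 * r))⁻¹ * ∑ j ∈ range (N + 1),
          c Q N j * ((A * Q ^ (2 * r)) ^ j * Q ^ (j ^ 2) *
            (qPoch (A * Q ^ (2 * r) * Q) Q j)⁻¹) := by
          rw [mul_sum]; apply sum_congr rfl; intro j _; rw [e, mul_inv]; ring
      _ = _ := by
          rw [vander hQ N _ hB, u, e, K_add, mul_inv]; ring
  · rw [u, K_zero (by omega), zero_mul, mul_zero]
    apply sum_eq_zero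
    intro m hm
    have : m < L + 1 := by simpa using hm
    rw [u, K_zero (L := m) (m := r) (by omega)]; simp

lemma qbinom {Q : ℂ} (hQ : ∀ m : ℕ, 1 ≤ m → Q ^ m ≠ 1) (q : ℂ) (hq : Q = q ^ 2) (z : ℂ) (N : ℕ) :
    ∑ j ∈ range (N + 1), c Q N j * (z ^ j * q ^ (j ^ 2 + j)) =
      (qPoch Q Q N)⁻¹ * qPoch (-(z * Q)) Q N := by
  induction N with
  | zero => simp [c, K, qPoch_zero]
  | succ N ih =>
    apply mul_left_cancel₀ (one_sub_Q_ne hQ N)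
    rw [pascal_sum hQ]
    have e : ∀ j ∈ range (N + 1), c Q N j * (z ^ j * q ^ (j ^ 2 + j) +
        Q ^ (N - j) * (z ^ (j + 1) * q ^ ((j + 1) ^ 2 + (j + 1)))) =
        (1 + z * Q ^ (N + 1)) * (c Q N j * (z ^ j * q ^ (j ^ 2 + j))) := by
      intro j hj
      have hj' : j ≤ N := by simpa [Nat.lt_succ_iff] using hj
      obtain ⟨d, rfl⟩ := Nat.exists_eq_add_of_le hj'
      rw [Nat.add_sub_cancel_left, hq]
      ring
    rw [sum_congr rfl e, ← mul_sum, ih, qPoch_succ, qPoch_succ]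
    have h5 := qPochQ_ne hQ N
    have h6 := one_sub_Q_ne hQ N
    rw [show Q ^ (N + 1) = Q * Q ^ N by ring] at *
    field_simp
    ring

lemma twostep {Q a : ℂ} (hQ : ∀ m : ℕ, 1 ≤ m → Q ^ m ≠ 1) (hA : ∀ m : ℕ, 1 ≤ m → -a * Q ^ m ≠ 1)
    (q : ℂ) (hq : Q = q ^ 2) (x L : ℕ) :
    ∑ m ∈ range (L + 1), K Q L m * (a ^ m * q ^ (m ^ 2 + m)) * K Q m x =
      a ^ x * q ^ (x ^ 2 + x) * qPoch (-a * Q) Q L * (qPoch (-a * Q) Q x)⁻¹ * K Q L x := by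
  by_cases h : x ≤ L
  · obtain ⟨N, rfl⟩ := Nat.exists_eq_add_of_le h
    have h1 := qPoch_ne hA x
    rw [shift_sum Q x N (fun m => a ^ m * q ^ (m ^ 2 + m)), qPoch_add, K_add]
    have := qbinom hQ q hq (a * Q ^ x) N
    calc _ = a ^ x * q ^ (x ^ 2 + x) * ∑ j ∈ range (N + 1),
          c Q N j * ((a * Q ^ x) ^ j * q ^ (j ^ 2 + j)) := by
          rw [mul_sum]; apply sum_congr rfl; intro j _; rw [hq]; ring
      _ = _ := by
          rw [this, show -(a * Q ^ x * Q) = -a * Q * Q ^ x by ring]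
          generalize qPoch (-a * Q) Q x = p1 at *
          field_simp
  · rw [K_zero (by omega), mul_zero]
    apply sum_eq_zero
    intro m hm
    have : m < L + 1 := by simpa using hm
    rw [K_zero (L := m) (m := x) (by omega)]; simp

/-- Coefficients. -/
noncomputable def W (Q a : ℂ) (r : ℕ) : ℂ :=
  (-a) ^ r * Q ^ (r ^ 2) * qPoch (a ^ 2 * Q) Q r * (qPoch Q Q r)⁻¹

lemma W_succ (Q a : ℂ) (r : ℕ) : W Q a (r + 1) =
    W Q a r * (-a * Q ^ (2 * r + 1) * (1 - a ^ 2 * Q * Q ^ r) * (1 - Q * Q ^ r)⁻¹) := by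
  simp only [W, qPoch_succ, mul_inv]
  ring

noncomputable def tt (Q a : ℂ) (n r : ℕ) : ℂ :=
  W Q a r * (1 - a ^ 2 * Q ^ (2 * r + 1)) * K Q n r * (qPoch (a ^ 2 * Q) Q (n + r + 1))⁻¹ *
    qPoch Q Q n * qPoch (-a * Q) Q n

noncomputable def GG (Q a : ℂ) (n r : ℕ) : ℂ :=
  -Q ^ (n + 1 - r) * (1 - Q ^ r) * (1 + a * Q ^ r) * W Q a r * K Q (n + 1) r *
    (qPoch (a ^ 2 * Q) Q (n + r + 1))⁻¹ * qPoch Q Q n * qPoch (-a * Q) Q n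

lemma wz {Q a : ℂ} (hQ : ∀ m : ℕ, 1 ≤ m → Q ^ m ≠ 1) (hA : ∀ m : ℕ, 1 ≤ m → a ^ 2 * Q ^ m ≠ 1)
    {n r : ℕ} (h : r ≤ n + 1) :
    tt Q a (n + 1) r - tt Q a n r = GG Q a n (r + 1) - GG Q a n r := by
  by_cases h' : r ≤ n
  · obtain ⟨d, rfl⟩ := Nat.exists_eq_add_of_le h'
    have e1 : K Q (r + d + 1) r = (qPoch Q Q d)⁻¹ * (1 - Q * Q ^ d)⁻¹ := by
      rw [add_assoc, K_add, qPoch_succ, mul_inv]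
    have e2 : K Q (r + d + 1) (r + 1) = (qPoch Q Q d)⁻¹ := by
      rw [show r + d + 1 = (r + 1) + d by ring, K_add]
    have s1 : r + d + 1 - (r + 1) = d := by omega
    have s2 : r + d + 1 - r = d + 1 := by omega
    have h1 := qPochQ_ne hQ d
    have h2 := one_sub_Q_ne hQ d
    have h3 := one_sub_Q_ne hQ r
    have h4 := qPoch_ne hA (r + d + r + 1)
    have h5 := one_sub_ne hA (r + d + r + 1)
    simp only [tt, GG, W_succ, e1, e2, K_add, s1, s2, qPoch_succ Q Q (r + d),
      qPoch_succ (-a * Q) Q (r + d)]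
    rw [show r + d + 1 + r + 1 = (r + d + r + 1) + 1 by ring,
      show r + d + (r + 1) + 1 = (r + d + r + 1) + 1 by ring, qPoch_succ (a ^ 2 * Q)]
    generalize qPoch (a ^ 2 * Q) Q (r + d + r + 1) = p1 at *
    generalize qPoch Q Q (r + d) = p2 at *
    generalize qPoch Q Q d = p3 at *
    generalize qPoch (-a * Q) Q (r + d) = p4 at *
    generalize W Q a r = w at *
    simp only [pow_add, pow_one, pow_mul, mul_comm 2 r] at *
    generalize Q ^ r = y at *
    generalize Q ^ d = z at *
    rw [mul_comm] at h2 h3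
    have h5' : 1 - a ^ 2 * Q * (y * z * y * Q) ≠ 0 := by
      convert h5 using 1; ring
    obtain ⟨D, hD⟩ : ∃ D, D = 1 - a ^ 2 * Q * (y * z * y * Q) := ⟨_, rfl⟩
    obtain ⟨E, hE⟩ : ∃ E, E = 1 - Q * y := ⟨_, rfl⟩
    rw [← hD] at h5' ⊢
    rw [← hE] at h3 ⊢
    field_simp
    rw [hD, hE]
    ring
  · obtain rfl : r = n + 1 := by omega
    have h3 := one_sub_Q_ne hQ n
    have h4 := qPoch_ne hA (n + (n + 1) + 1)
    have h5 := one_sub_ne hA (n + (n + 1) + 1)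
    have e0 : K Q (n + 1) (n + 1) = 1 := by simp [K, qPoch_zero]
    simp only [tt, GG, e0, K_zero (show n < n + 1 by omega),
      K_zero (show n + 1 < n + 1 + 1 by omega), qPoch_succ Q Q n, qPoch_succ (-a * Q) Q n]
    rw [show n + 1 + (n + 1) + 1 = (n + (n + 1) + 1) + 1 by ring, qPoch_succ (a ^ 2 * Q),
      Nat.sub_self]
    generalize qPoch (a ^ 2 * Q) Q (n + (n + 1) + 1) = p1 at *
    generalize qPoch Q Q n = p2 at *
    generalize qPoch (-a * Q) Q n = p4 at *
    generalize W Q a (n + 1) = w at *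
    have e7 : Q ^ (2 * (n + 1) + 1) = Q ^ (n + (n + 1) + 1 + 1) := by
      congr 1; ring
    have e8 : a ^ 2 * Q * Q ^ (n + (n + 1) + 1) = a ^ 2 * Q ^ (n + (n + 1) + 1 + 1) := by ring
    rw [e7, e8]
    field_simp
    ring

lemma base {Q a : ℂ} (hQ : ∀ m : ℕ, 1 ≤ m → Q ^ m ≠ 1) (hA : ∀ m : ℕ, 1 ≤ m → a ^ 2 * Q ^ m ≠ 1)
    (n : ℕ) : ∑ r ∈ range (n + 1), tt Q a n r = 1 := by
  induction n with
  | zero =>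
    have h5 := one_sub_ne hA 0
    simp [tt, W, K, qPoch_zero, qPoch_succ] at *
    field_simp
  | succ n ih =>
    have : ∑ r ∈ range (n + 2), (tt Q a (n + 1) r - tt Q a n r) = 0 := by
      rw [sum_congr rfl (fun r hr => wz hQ hA (by simpa [Nat.lt_succ_iff] using hr)),
        sum_range_sub]
      simp [GG, K_zero]
    rw [sum_sub_distrib, sum_range_succ (tt Q a n), ih] at this
    have h0 : tt Q a n (n + 1) = 0 := by simp [tt, K_zero]
    rw [h0, add_zero, sub_eq_zero] at this
    exact this

/-- Iterated chain sums. -/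
noncomputable def F (Q : ℂ) : ℕ → (ℕ → ℕ → ℂ) → (ℕ → ℂ) → ℕ → ℂ
  | 0, _, g, L => g L
  | n + 1, w, g, L => ∑ m ∈ range (L + 1), K Q L m * w 0 m * F Q n (fun j => w (j + 1)) g m

/-- Weights for the second sum. -/
noncomputable def wp (Q a : ℂ) (p : ℕ) : ℕ → ℕ → ℂ :=
  fun m x => (a ^ 2) ^ x * Q ^ (x ^ 2) * (if m < p then 1 else Q ^ x)

lemma wp_shift (Q a : ℂ) (p : ℕ) : (fun j => wp Q a p (j + 1)) = wp Q a (p - 1) := by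
  funext m x
  have : m + 1 < p ↔ m < p - 1 := by omega
  simp only [wp, this]

/-- Weights for the third sum. -/
noncomputable def w3 (Q q a : ℂ) (p : ℕ) : ℕ → ℕ → ℂ :=
  fun m x => if m % 2 = 0 then a ^ x * q ^ (x ^ 2 + x) else
    a ^ x * q ^ (x ^ 2 - x) * (if m / 2 < p then 1 else Q ^ x)

lemma w3_shift (Q q a : ℂ) (p : ℕ) : (fun j => w3 Q q a p (j + 1 + 1)) = w3 Q q a (p - 1) := by
  funext m x
  have h1 : (m + 1 + 1) / 2 < p ↔ m / 2 < p - 1 := by omega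
  have h2 : (m + 1 + 1) % 2 = m % 2 := by omega
  simp only [w3, h1, h2]

noncomputable def g2 (Q a : ℂ) (L : ℕ) : ℂ := (qPoch Q Q L)⁻¹ * (qPoch (-a * Q) Q L)⁻¹

noncomputable def g3 (Q : ℂ) (L : ℕ) : ℂ := (qPoch Q Q L)⁻¹

lemma F_three {Q a : ℂ} (hQ : ∀ m : ℕ, 1 ≤ m → Q ^ m ≠ 1) (hA : ∀ m : ℕ, 1 ≤ m → -a * Q ^ m ≠ 1)
    (q : ℂ) (hq : Q = q ^ 2) (j : ℕ) : ∀ p L,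
    F Q (2 * j) (w3 Q q a p) (g3 Q) L =
      qPoch (-a * Q) Q L * F Q j (wp Q a p) (g2 Q a) L := by
  induction j with
  | zero =>
    intro p L
    have := qPoch_ne hA L
    simp only [F, g2, g3]
    generalize qPoch (-a * Q) Q L = p1 at *
    field_simp
  | succ j ih =>
    intro p L
    rw [show 2 * (j + 1) = 2 * j + 1 + 1 by ring, F, F, wp_shift]
    have e : ∀ m ∈ range (L + 1), K Q L m * w3 Q q a p 0 m *
        F Q (2 * j + 1) (fun j => w3 Q q a p (j + 1)) (g3 Q) m =
        ∑ x ∈ range (L + 1), (K Q L m * (a ^ m * q ^ (m ^ 2 + m)) * K Q m x) *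
          (w3 Q q a p 1 x * (qPoch (-a * Q) Q x * F Q j (wp Q a (p - 1)) (g2 Q a) x)) := by
      intro m hm
      have hm' : m + 1 ≤ L + 1 := by simpa [Nat.lt_succ_iff] using hm
      have hext : F Q (2 * j + 1) (fun j => w3 Q q a p (j + 1)) (g3 Q) m =
          ∑ x ∈ range (L + 1), K Q m x *
            (w3 Q q a p 1 x * (qPoch (-a * Q) Q x * F Q j (wp Q a (p - 1)) (g2 Q a) x)) := by
        rw [F, w3_shift]
        have hsub : range (m + 1) ⊆ range (L + 1) := range_subset_range.2 hm'
        rw [← sum_subset hsub]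
        · apply sum_congr rfl
          intro x _
          rw [ih]; ring
        · intro x _ hx
          rw [K_zero (by simpa using hx), zero_mul]
      rw [hext, mul_sum]
      apply sum_congr rfl
      intro x _
      simp [w3]; ring
    rw [sum_congr rfl e, sum_comm, mul_sum]
    apply sum_congr rfl
    intro x _
    rw [← sum_mul, twostep hQ hA q hq]
    have := qPoch_ne hA x
    have e1 : q ^ (x ^ 2 + x) * q ^ (x ^ 2 - x) = Q ^ (x ^ 2) := by
      have : x ≤ x ^ 2 := Nat.le_self_pow (by norm_num) x
      rw [hq, ← pow_add, ← pow_mul]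
      congr 1; omega
    have e2 : w3 Q q a p 1 x = a ^ x * q ^ (x ^ 2 - x) * (if 0 < p then 1 else Q ^ x) := by
      simp [w3]
    rw [e2, wp, ← e1]
    generalize qPoch (-a * Q) Q x = p1 at *
    field_simp
    ring

lemma F_const {Q a : ℂ} (hQ : ∀ m : ℕ, 1 ≤ m → Q ^ m ≠ 1)
    (hA : ∀ m : ℕ, 1 ≤ m → a ^ 2 * Q ^ m ≠ 1) (hA' : ∀ m : ℕ, 1 ≤ m → -a * Q ^ m ≠ 1)
    (j : ℕ) : ∀ L N, L < N →
    F Q j (wp Q a 0) (g2 Q a) L = ∑ r ∈ range N, W Q a r * (1 - a ^ 2 * Q ^ (2 * r + 1)) *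
      ((a ^ 2 * Q) ^ r * Q ^ (r ^ 2)) ^ j * u Q (a ^ 2 * Q) r L * (1 - a ^ 2 * Q)⁻¹ := by
  have h0 : 1 - a ^ 2 * Q ≠ 0 := by simpa using one_sub_ne hA 0
  induction j with
  | zero =>
    intro L N hN
    have h1 := qPochQ_ne hQ L
    have h2 := qPoch_ne hA' L
    have hsub : range (L + 1) ⊆ range N := range_subset_range.2 hN
    rw [← sum_subset hsub]
    · have := base hQ hA L
      have e : F Q 0 (wp Q a 0) (g2 Q a) L = (qPoch Q Q L)⁻¹ * (qPoch (-a * Q) Q L)⁻¹ *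
          ∑ r ∈ range (L + 1), tt Q a L r := by rw [this, mul_one, F, g2]
      rw [e, mul_sum]
      apply sum_congr rfl
      intro r _
      rw [tt, u, qPoch_succ', mul_inv, pow_zero]
      generalize qPoch (-a * Q) Q L = p1 at *
      field_simp
    · intro r _ hr
      rw [u, K_zero (by simpa using hr)]; simp
  | succ j ih =>
    intro L N hN
    have hA2 : ∀ m : ℕ, 1 ≤ m → a ^ 2 * Q * Q ^ m ≠ 1 := by
      intro m hm
      have := hA (m + 1) (by omega)
      rwa [show a ^ 2 * Q * Q ^ m = a ^ 2 * Q ^ (m + 1) by ring]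
    rw [F, wp_shift]
    have e : ∀ m ∈ range (L + 1), K Q L m * wp Q a 0 0 m * F Q j (wp Q a (0 - 1)) (g2 Q a) m =
        ∑ r ∈ range N, (W Q a r * (1 - a ^ 2 * Q ^ (2 * r + 1)) *
          ((a ^ 2 * Q) ^ r * Q ^ (r ^ 2)) ^ j * (1 - a ^ 2 * Q)⁻¹) *
          (K Q L m * ((a ^ 2 * Q) ^ m * Q ^ (m ^ 2)) * u Q (a ^ 2 * Q) r m) := by
      intro m hm
      have hm' : m < L + 1 := by simpa using hm
      rw [ih m N (by omega), mul_sum]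
      apply sum_congr rfl
      intro r _
      simp [wp]; ring
    rw [sum_congr rfl e, sum_comm]
    apply sum_congr rfl
    intro r _
    rw [← mul_sum, bailey hQ hA2]
    ring

lemma u_switch {Q A : ℂ} (hQ : ∀ m : ℕ, 1 ≤ m → Q ^ m ≠ 1)
    (hA : ∀ m : ℕ, 1 ≤ m → A * Q ^ m ≠ 1) (r L : ℕ) :
    (1 - A * Q ^ (2 * r + 1)) * u Q (A * Q) r L * (1 - A * Q)⁻¹ =
      u Q A r L - A * Q ^ (2 * r + 1) * u Q A (r + 1) L := by
  have h0 : 1 - A * Q ≠ 0 := by simpa using one_sub_ne hA 0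
  by_cases h : r ≤ L
  · obtain ⟨d, rfl⟩ := Nat.exists_eq_add_of_le h
    have e : (qPoch (A * Q * Q) Q (r + d + r))⁻¹ * (1 - A * Q)⁻¹ =
        (qPoch (A * Q) Q (r + d + r))⁻¹ * (1 - A * Q * Q ^ (r + d + r))⁻¹ := by
      rw [← mul_inv, ← mul_inv, ← qPoch_succ, qPoch_succ', mul_comm]
    have h1 := qPoch_ne hA (r + d + r)
    have h2 := one_sub_ne hA (r + d + r)
    have h3 := qPochQ_ne hQ d
    have e3 : A * Q * Q ^ (r + d + r) = A * Q ^ (r + d + r + 1) := by ring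
    have : (1 - A * Q ^ (2 * r + 1)) * u Q (A * Q) r (r + d) * (1 - A * Q)⁻¹ =
        (1 - A * Q ^ (2 * r + 1)) * K Q (r + d) r *
          ((qPoch (A * Q * Q) Q (r + d + r))⁻¹ * (1 - A * Q)⁻¹) := by rw [u]; ring
    rw [this, e, u, u, K_add, show r + d + (r + 1) = r + d + r + 1 by ring, qPoch_succ, e3]
    obtain ⟨D, hD⟩ : ∃ D, D = 1 - A * Q ^ (r + d + r + 1) := ⟨_, rfl⟩
    rw [← hD] at h2 ⊢
    rcases d with _ | d
    · rw [K_zero (by omega)]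
      have : A * Q ^ (2 * r + 1) = 1 - D := by rw [hD]; ring
      rw [this]
      simp only [qPoch_zero]
      field_simp
      ring
    · have e2 : K Q (r + (d + 1)) (r + 1) = (qPoch Q Q d)⁻¹ := by
        rw [show r + (d + 1) = (r + 1) + d by ring, K_add]
      rw [e2]
      have h4 := qPochQ_ne hQ d
      have h5 := one_sub_Q_ne hQ d
      rw [show Q ^ (d + 1) = Q * Q ^ d by ring] at h5
      rw [qPoch_succ Q Q d]
      generalize qPoch (A * Q) Q (r + (d + 1) + r) = p1 at *
      field_simp
      rw [hD]
      ring
  · rw [u, u, u, K_zero (by omega), K_zero (by omega)]; simp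

lemma F_two {Q a : ℂ} (hQ : ∀ m : ℕ, 1 ≤ m → Q ^ m ≠ 1)
    (hA : ∀ m : ℕ, 1 ≤ m → a ^ 2 * Q ^ m ≠ 1) (hA' : ∀ m : ℕ, 1 ≤ m → -a * Q ^ m ≠ 1)
    (j p : ℕ) : ∀ L N, L < N →
    F Q (p + j) (wp Q a p) (g2 Q a) L = ∑ r ∈ range N, W Q a r *
      ((a ^ 2 * Q) ^ r * Q ^ (r ^ 2)) ^ j * ((a ^ 2) ^ r * Q ^ (r ^ 2)) ^ p *
        (u Q (a ^ 2) r L - (a ^ 2 * Q ^ (2 * r + 1)) ^ (p + 1) * u Q (a ^ 2) (r + 1) L) := by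
  induction p with
  | zero =>
    intro L N hN
    rw [zero_add, F_const hQ hA hA' j L N hN]
    apply sum_congr rfl
    intro r _
    rw [zero_add, pow_one, ← u_switch hQ hA]
    ring
  | succ p ih =>
    intro L N hN
    rw [show p + 1 + j = (p + j) + 1 by ring, F, wp_shift]
    have e : ∀ m ∈ range (L + 1), K Q L m * wp Q a (p + 1) 0 m *
        F Q (p + j) (wp Q a (p + 1 - 1)) (g2 Q a) m =
        ∑ r ∈ range N, (W Q a r *
          ((a ^ 2 * Q) ^ r * Q ^ (r ^ 2)) ^ j * ((a ^ 2) ^ r * Q ^ (r ^ 2)) ^ p) *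
          (K Q L m * ((a ^ 2) ^ m * Q ^ (m ^ 2)) * u Q (a ^ 2) r m -
          (a ^ 2 * Q ^ (2 * r + 1)) ^ (p + 1) *
            (K Q L m * ((a ^ 2) ^ m * Q ^ (m ^ 2)) * u Q (a ^ 2) (r + 1) m)) := by
      intro m hm
      have hm' : m < L + 1 := by simpa using hm
      rw [Nat.add_sub_cancel, ih m N (by omega), mul_sum]
      apply sum_congr rfl
      intro r _
      simp [wp]; ring
    rw [sum_congr rfl e, sum_comm]
    apply sum_congr rfl
    intro r _
    rw [← mul_sum, sum_sub_distrib, ← mul_sum, bailey hQ hA, bailey hQ hA]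
    ring

open Filter Topology

lemma summable_xq {Q : ℂ} (h : ‖Q‖ < 1) (x : ℂ) : Summable (fun j : ℕ => ‖-(x * Q ^ j)‖) := by
  simp only [norm_neg, norm_mul, norm_pow]
  exact (summable_geometric_of_lt_one (norm_nonneg _) h).mul_left _

lemma qPoch_tendsto {Q : ℂ} (h : ‖Q‖ < 1) (x : ℂ) :
    Tendsto (qPoch x Q) atTop (𝓝 (qPochInf x Q)) := by
  have := multipliable_one_add_of_summable (summable_xq h x)
  have h2 := this.hasProd.tendsto_prod_nat
  simp only [← sub_eq_add_neg] at h2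
  exact h2

lemma qPochInf_ne {Q B : ℂ} (h : ‖Q‖ < 1) (hB : ∀ m : ℕ, 1 ≤ m → B * Q ^ m ≠ 1) :
    qPochInf (B * Q) Q ≠ 0 := by
  have := tprod_one_add_ne_zero_of_summable (f := fun j : ℕ => -(B * Q * Q ^ j))
    (by
      intro j
      have := one_sub_ne hB j
      rwa [← sub_eq_add_neg, show B * Q * Q ^ j = B * Q ^ (j + 1) by ring]) (summable_xq h (B * Q))
  simpa only [qPochInf, ← sub_eq_add_neg] using this

lemma bdd_of_tendsto {f : ℕ → ℂ} {l : ℂ} (h : Tendsto f atTop (𝓝 l)) :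
    ∃ C : ℝ, 0 ≤ C ∧ ∀ n, ‖f n‖ ≤ C := by
  obtain ⟨C, hC⟩ := (Metric.isBounded_range_of_tendsto f h).exists_norm_le
  refine ⟨C, (norm_nonneg _).trans (hC (f 0) ⟨0, rfl⟩), fun n => hC _ ⟨n, rfl⟩⟩

lemma inv_tendsto {Q B : ℂ} (h : ‖Q‖ < 1) (hB : ∀ m : ℕ, 1 ≤ m → B * Q ^ m ≠ 1) :
    Tendsto (fun n => (qPoch (B * Q) Q n)⁻¹) atTop (𝓝 (qPochInf (B * Q) Q)⁻¹) :=
  (qPoch_tendsto h _).inv₀ (qPochInf_ne h hB)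

lemma pow_ne_one' {Q : ℂ} (h : ‖Q‖ < 1) : ∀ m : ℕ, 1 ≤ m → Q ^ m ≠ 1 := by
  intro m hm he
  have h1 : ‖Q‖ ^ m < 1 := pow_lt_one₀ (norm_nonneg _) h (by omega)
  rw [← norm_pow, he] at h1
  simp at h1

lemma invQ_tendsto {Q : ℂ} (h : ‖Q‖ < 1) :
    Tendsto (fun n => (qPoch Q Q n)⁻¹) atTop (𝓝 (qPochInf Q Q)⁻¹) := by
  have := inv_tendsto (B := 1) h (by simpa using pow_ne_one' h)
  simpa using this

lemma qPochInfQ_ne {Q : ℂ} (h : ‖Q‖ < 1) : qPochInf Q Q ≠ 0 := by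
  have := qPochInf_ne (B := 1) h (by simpa using pow_ne_one' h)
  simpa using this

lemma K_bdd {Q : ℂ} (h : ‖Q‖ < 1) : ∃ C : ℝ, 0 ≤ C ∧ ∀ L m, ‖K Q L m‖ ≤ C := by
  obtain ⟨C, hC, h2⟩ := bdd_of_tendsto (invQ_tendsto h)
  refine ⟨C, hC, fun L m => ?_⟩
  rw [K]
  split_ifs
  · exact h2 _
  · simpa using hC

lemma K_tendsto {Q : ℂ} (h : ‖Q‖ < 1) (m : ℕ) :
    Tendsto (fun L => qPoch Q Q L * K Q L m) atTop (𝓝 1) := by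
  have h1 := (qPoch_tendsto h Q).mul ((invQ_tendsto h).comp (tendsto_sub_atTop_nat m))
  rw [mul_inv_cancel₀ (qPochInfQ_ne h)] at h1
  refine h1.congr' ?_
  filter_upwards [eventually_ge_atTop m] with L hL
  rw [K_le hL]; rfl

lemma summable_gauss (ρ s : ℝ) (hρ : 0 ≤ ρ) (hs : 0 ≤ s) (hs1 : s < 1) :
    Summable (fun x : ℕ => ρ ^ x * s ^ (x ^ 2)) := by
  refine Summable.of_norm_bounded_eventually_nat (g := fun x : ℕ => (1 / 2 : ℝ) ^ x)
    (summable_geometric_of_lt_one (by norm_num) (by norm_num)) ?_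
  have h1 : Tendsto (fun x : ℕ => ρ * s ^ x) atTop (𝓝 (ρ * 0)) :=
    (tendsto_pow_atTop_nhds_zero_of_lt_one hs hs1).const_mul ρ
  rw [mul_zero] at h1
  filter_upwards [h1.eventually_le_const (show (0 : ℝ) < 1 / 2 by norm_num)] with x hx
  rw [Real.norm_of_nonneg (by positivity)]
  calc ρ ^ x * s ^ (x ^ 2) = (ρ * s ^ x) ^ x := by rw [mul_pow, ← pow_mul, sq]
    _ ≤ _ := pow_le_pow_left₀ (by positivity) hx x

section generic
variable {Q : ℂ} {b : ℕ → ℝ} {g : ℕ → ℂ} {d : ℝ}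

lemma F_bdd (h : ‖Q‖ < 1) (hb : Summable b) (hb0 : ∀ x, 0 ≤ b x) (hg : ∀ x, ‖g x‖ ≤ d) (n : ℕ) :
    ∀ w : ℕ → ℕ → ℂ, (∀ m x, ‖w m x‖ ≤ b x) → ∃ C : ℝ, 0 ≤ C ∧ ∀ L, ‖F Q n w g L‖ ≤ C := by
  induction n with
  | zero => intro w _; exact ⟨d, (norm_nonneg _).trans (hg 0), fun L => by simpa [F] using hg L⟩
  | succ n ih =>
    intro w hw
    obtain ⟨C, hC, h1⟩ := ih (fun j => w (j + 1)) (fun m x => hw (m + 1) x)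
    obtain ⟨D, hD, h2⟩ := K_bdd h
    have hs : 0 ≤ ∑' x, b x := tsum_nonneg hb0
    refine ⟨D * (∑' x, b x) * C, by positivity, fun L => ?_⟩
    rw [F]
    refine (norm_sum_le _ _).trans ?_
    calc _ ≤ ∑ m ∈ range (L + 1), D * b m * C := by
          apply sum_le_sum
          intro m _
          rw [norm_mul, norm_mul]
          have := hb0 m
          gcongr
          · exact h2 _ _
          · exact hw _ _
          · exact h1 _
      _ = D * (∑ m ∈ range (L + 1), b m) * C := by rw [mul_sum, sum_mul]
      _ ≤ _ := by
          gcongr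
          exact hb.sum_le_tsum _ (fun x _ => hb0 x)

lemma F_lim (h : ‖Q‖ < 1) (hb : Summable b) (hb0 : ∀ x, 0 ≤ b x) (hg : ∀ x, ‖g x‖ ≤ d) (n : ℕ)
    (w : ℕ → ℕ → ℂ) (hw : ∀ m x, ‖w m x‖ ≤ b x) :
    Tendsto (fun L => qPoch Q Q L * F Q (n + 1) w g L) atTop
      (𝓝 (∑' x, w 0 x * F Q n (fun j => w (j + 1)) g x)) := by
  obtain ⟨C, hC, h1⟩ := F_bdd h hb hb0 hg n (fun j => w (j + 1)) (fun m x => hw (m + 1) x)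
  obtain ⟨D, hD, h2⟩ := K_bdd h
  obtain ⟨E, hE, h3⟩ := bdd_of_tendsto (qPoch_tendsto h Q)
  have e : ∀ L, qPoch Q Q L * F Q (n + 1) w g L =
      ∑' x, (qPoch Q Q L * K Q L x) * (w 0 x * F Q n (fun j => w (j + 1)) g x) := by
    intro L
    rw [tsum_eq_sum (s := range (L + 1)), F, mul_sum]
    · apply sum_congr rfl; intro x _; ring
    · intro x hx
      rw [K_zero (by simpa using hx)]; simp
  simp only [e]
  refine tendsto_tsum_of_dominated_convergence (bound := fun x => E * D * (b x * C))
    ((hb.mul_right C).mul_left (E * D)) ?_ ?_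
  · intro x
    simpa using (K_tendsto h x).mul_const (w 0 x * F Q n (fun j => w (j + 1)) g x)
  · filter_upwards with L x
    rw [norm_mul, norm_mul, norm_mul]
    have := hb0 x
    gcongr
    · exact h3 _
    · exact h2 _ _
    · exact hw _ _
    · exact h1 _

/-- The summand over tuples. -/
noncomputable def V (Q : ℂ) : (n : ℕ) → (ℕ → ℕ → ℂ) → (ℕ → ℂ) → (Fin (n + 1) → ℕ) → ℂ
  | 0, w, g, s => w 0 (s 0) * g (s 0)
  | n + 1, w, g, s => w 0 (s 0) * (K Q (s 0) (Fin.tail s 0) *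
      V Q n (fun j => w (j + 1)) g (Fin.tail s))

lemma summable_pi (hb : Summable b) (hb0 : ∀ x, 0 ≤ b x) (n : ℕ) :
    Summable (fun s : Fin n → ℕ => ∏ i, b (s i)) := by
  induction n with
  | zero => exact (hasSum_fintype _).summable
  | succ n ih =>
    rw [← (Fin.consEquiv (fun _ => ℕ)).summable_iff]
    have := hb.mul_of_nonneg ih hb0 (fun s => prod_nonneg (fun i _ => hb0 _))
    refine this.congr ?_
    rintro ⟨x, s⟩
    simp [Fin.consEquiv, Fin.prod_univ_succ]

lemma V_bdd (h : ‖Q‖ < 1) (hb0 : ∀ x, 0 ≤ b x) (hg : ∀ x, ‖g x‖ ≤ d) (n : ℕ) :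
    ∃ C : ℝ, 0 ≤ C ∧ ∀ w : ℕ → ℕ → ℂ, (∀ m x, ‖w m x‖ ≤ b x) →
      ∀ s, ‖V Q n w g s‖ ≤ C * ∏ i, b (s i) := by
  induction n with
  | zero =>
    refine ⟨d, (norm_nonneg _).trans (hg 0), fun w hw s => ?_⟩
    simp only [V, norm_mul, Fin.prod_univ_succ, Finset.univ_eq_empty, prod_empty, mul_one]
    rw [mul_comm]
    have := hb0 (s 0)
    have := (norm_nonneg _).trans (hg 0)
    gcongr
    · exact hg _
    · exact hw _ _
  | succ n ih =>
    obtain ⟨C, hC, h1⟩ := ih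
    obtain ⟨D, hD, h2⟩ := K_bdd h
    refine ⟨D * C, by positivity, fun w hw s => ?_⟩
    rw [V, Fin.prod_univ_succ, norm_mul, norm_mul]
    have h3 := h1 (fun j => w (j + 1)) (fun m x => hw (m + 1) x) (Fin.tail s)
    have := hb0 (s 0)
    calc _ ≤ b (s 0) * (D * (C * ∏ i, b (Fin.tail s i))) := by
          gcongr
          · exact hw _ _
          · exact h2 _ _
      _ = _ := by simp only [Fin.tail]; ring

lemma V_tsum (h : ‖Q‖ < 1) (hb : Summable b) (hb0 : ∀ x, 0 ≤ b x) (hg : ∀ x, ‖g x‖ ≤ d) (n : ℕ) :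
    ∀ w : ℕ → ℕ → ℂ, (∀ m x, ‖w m x‖ ≤ b x) → ∀ (p : ℕ → ℂ) (P : ℝ), (∀ x, ‖p x‖ ≤ P) →
      ∑' s, p (s 0) * V Q n w g s = ∑' x, p x * (w 0 x * F Q n (fun j => w (j + 1)) g x) := by
  induction n with
  | zero =>
    intro w hw p P hp
    rw [← (Equiv.funUnique (Fin 1) ℕ).symm.tsum_eq]
    rfl
  | succ n ih =>
    intro w hw p P hp
    have hP : 0 ≤ P := (norm_nonneg _).trans (hp 0)
    obtain ⟨C, hC, h1⟩ := V_bdd h hb0 hg (n + 1)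
    obtain ⟨D, hD, h2⟩ := K_bdd h
    have hsum : Summable (fun s => p (s 0) * V Q (n + 1) w g s) := by
      refine Summable.of_norm_bounded (((summable_pi hb hb0 (n + 2)).mul_left C).mul_left P) ?_
      intro s
      rw [norm_mul]
      gcongr
      · exact hp _
      · exact h1 w hw s
    rw [← (Fin.consEquiv (fun _ => ℕ)).tsum_eq]
    rw [← (Fin.consEquiv (fun _ => ℕ)).summable_iff] at hsum
    rw [show (∑' c : ℕ × (Fin (n + 1) → ℕ), p ((Fin.consEquiv fun _ => ℕ) c 0) *
      V Q (n + 1) w g ((Fin.consEquiv fun _ => ℕ) c)) = _ from Summable.tsum_prod hsum]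
    apply tsum_congr
    intro x
    have e : ∀ s : Fin (n + 1) → ℕ,
        p ((Fin.consEquiv (fun _ : Fin (n + 2) => ℕ)) (x, s) 0) *
          V Q (n + 1) w g ((Fin.consEquiv (fun _ : Fin (n + 2) => ℕ)) (x, s)) =
        (p x * w 0 x) * (K Q x (s 0) * V Q n (fun j => w (j + 1)) g s) := by
      intro s
      simp only [V, Fin.consEquiv, Equiv.coe_fn_mk, Fin.cons_zero, Fin.tail_cons]
      ring
    rw [tsum_congr e, tsum_mul_left, ih _ (fun m x => hw (m + 1) x) (K Q x) D (h2 x), mul_assoc]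
    congr 2
    rw [F, tsum_eq_sum (s := range (x + 1))]
    · apply sum_congr rfl; intro m _; ring
    · intro m hm
      rw [K_zero (by simpa using hm)]; simp

end generic

/-- extension of a tuple by zero -/
def ext (N : ℕ) (s : Fin N → ℕ) : ℕ → ℕ := fun m => if h : m < N then s ⟨m, h⟩ else 0

lemma ext_zero (n : ℕ) (s : Fin (n + 1) → ℕ) : ext (n + 1) s 0 = s 0 := by
  simp [ext]

lemma ext_succ (n m : ℕ) (s : Fin (n + 1) → ℕ) :
    ext (n + 1) s (m + 1) = ext n (Fin.tail s) m := by
  simp [ext, Fin.tail]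

lemma antitone_tail {n : ℕ} {s : Fin (n + 1) → ℕ} (hs : Antitone s) : Antitone (Fin.tail s) := by
  intro i j hij
  exact hs (Fin.succ_le_succ_iff.2 hij)

lemma V_not (Q : ℂ) (g : ℕ → ℂ) (n : ℕ) : ∀ (w : ℕ → ℕ → ℂ) (s : Fin (n + 1) → ℕ),
    ¬ Antitone s → V Q n w g s = 0 := by
  induction n with
  | zero =>
    intro w s hs
    exact absurd (fun i j _ => by rw [show i = j from Subsingleton.elim (α := Fin 1) i j]) hs
  | succ n ih =>
    intro w s hs
    rw [V]
    by_cases h1 : Fin.tail s 0 ≤ s 0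
    · rw [ih _ (Fin.tail s), mul_zero, mul_zero]
      intro h2
      apply hs
      intro i j hij
      induction i using Fin.cases with
      | zero =>
        induction j using Fin.cases with
        | zero => exact le_rfl
        | succ j => exact (h2 (Fin.zero_le j)).trans h1
      | succ i =>
        induction j using Fin.cases with
        | zero => simp at hij
        | succ j => exact h2 (Fin.succ_le_succ_iff.1 hij)
    · rw [K_zero (by omega)]; simp

lemma V_eq (Q : ℂ) (h : ℕ → ℂ) (n : ℕ) : ∀ (w : ℕ → ℕ → ℂ) (s : Fin (n + 1) → ℕ),
    Antitone s → V Q n w (fun x => (qPoch Q Q x)⁻¹ * h x) s =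
      (∏ m ∈ range (n + 1), w m (ext (n + 1) s m)) *
      (∏ m ∈ range (n + 1), qPoch Q Q (ext (n + 1) s m - ext (n + 1) s (m + 1)))⁻¹ *
      h (ext (n + 1) s n) := by
  induction n with
  | zero =>
    intro w s hs
    simp [V, ext]
    ring
  | succ n ih =>
    intro w s hs
    rw [V, ih _ _ (antitone_tail hs), prod_range_succ' _ (n + 1), prod_range_succ' _ (n + 1)]
    have h1 : Fin.tail s 0 ≤ s 0 := hs (Fin.zero_le _)
    rw [K_le h1]
    simp only [ext_succ (n + 1), ext_zero]
    rw [mul_inv]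
    ring

lemma tuple_lim {Q : ℂ} {b : ℕ → ℝ} {h : ℕ → ℂ} {d : ℝ} (hQ : ‖Q‖ < 1) (hb : Summable b)
    (hb0 : ∀ x, 0 ≤ b x) (hg : ∀ x, ‖(qPoch Q Q x)⁻¹ * h x‖ ≤ d) (N : ℕ) (hN : 1 ≤ N)
    (w : ℕ → ℕ → ℂ) (hw : ∀ m x, ‖w m x‖ ≤ b x) :
    Tendsto (fun L => qPoch Q Q L * F Q N w (fun x => (qPoch Q Q x)⁻¹ * h x) L) atTop
      (𝓝 (∑' s : {s : Fin N → ℕ // Antitone s},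
        (∏ m ∈ range N, w m (ext N s.1 m)) *
        (∏ m ∈ range N, qPoch Q Q (ext N s.1 m - ext N s.1 (m + 1)))⁻¹ *
        h (ext N s.1 (N - 1)))) := by
  obtain ⟨n, rfl⟩ : ∃ n, N = n + 1 := ⟨N - 1, by omega⟩
  have h1 := F_lim hQ hb hb0 hg n w hw
  have h2 := V_tsum hQ hb hb0 hg n w hw (fun _ => 1) 1 (by simp)
  simp only [one_mul] at h2
  rw [← h2] at h1
  convert h1 using 2
  have h3 := tsum_subtype_eq_of_support_subset (f := V Q n w (fun x => (qPoch Q Q x)⁻¹ * h x))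
    (s := {s | Antitone s}) (by
      intro s hs
      by_contra hc
      exact hs (V_not Q _ n w s hc))
  rw [← h3]
  apply tsum_congr
  rintro ⟨s, hs⟩
  exact (V_eq Q h n w s hs).symm

lemma prod_if (p N : ℕ) (X : ℕ → ℂ) :
    ∏ m ∈ range N, (if m < p then 1 else X m) = ∏ m ∈ Ico p N, X m := by
  induction N with
  | zero => simp
  | succ N ih =>
    rw [prod_range_succ, ih]
    split_ifs with h
    · rw [Ico_eq_empty (by omega), Ico_eq_empty (by omega)]; simp
    · rw [prod_Ico_succ_top (by omega)]

lemma term_two (q a : ℂ) (p N : ℕ) (t : ℕ → ℕ) :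
    ∏ m ∈ range N, wp (q ^ 2) a p m (t m) =
      a ^ (2 * ∑ m ∈ range N, t m) *
        q ^ (2 * ∑ m ∈ range N, (t m) ^ 2 + 2 * ∑ m ∈ Ico p N, t m) := by
  simp only [wp, prod_mul_distrib, prod_if p N (fun m => (q ^ 2) ^ t m), prod_pow_eq_pow_sum]
  rw [← pow_mul, ← pow_mul, ← pow_mul, mul_assoc, ← pow_add]

lemma term_three (q a : ℂ) (p M : ℕ) (t : ℕ → ℕ) (ht : ∀ m, t (m + 1) ≤ t m) :
    ∏ m ∈ range (2 * M), w3 (q ^ 2) q a p m (t m) =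
      a ^ (∑ m ∈ range (2 * M), t m) *
        q ^ (∑ m ∈ range (2 * M), (t m) ^ 2 + 2 * ∑ m ∈ Ico p M, t (2 * m + 1) +
          ∑ m ∈ range M, (t (2 * m) - t (2 * m + 1))) := by
  induction M with
  | zero => simp
  | succ M ih =>
    rw [show 2 * (M + 1) = 2 * M + 1 + 1 by ring]
    simp only [prod_range_succ _ (2 * M + 1), prod_range_succ _ (2 * M),
      sum_range_succ _ (2 * M + 1), sum_range_succ _ (2 * M), sum_range_succ _ M, ih]
    have e1 : w3 (q ^ 2) q a p (2 * M) (t (2 * M)) =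
        a ^ t (2 * M) * q ^ (t (2 * M) ^ 2 + t (2 * M)) := by simp [w3]
    have e2 : w3 (q ^ 2) q a p (2 * M + 1) (t (2 * M + 1)) =
        a ^ t (2 * M + 1) * q ^ (t (2 * M + 1) ^ 2 - t (2 * M + 1)) *
        (if M < p then 1 else (q ^ 2) ^ t (2 * M + 1)) := by
      have h1 : (2 * M + 1) % 2 = 1 := by omega
      have h2 : (2 * M + 1) / 2 = M := by omega
      simp [w3, h1, h2]
    have e3 : q ^ (t (2 * M) ^ 2 + t (2 * M)) * q ^ (t (2 * M + 1) ^ 2 - t (2 * M + 1)) =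
        q ^ (t (2 * M) ^ 2 + t (2 * M + 1) ^ 2 + (t (2 * M) - t (2 * M + 1))) := by
      have := ht (2 * M)
      have : t (2 * M + 1) ≤ t (2 * M + 1) ^ 2 := Nat.le_self_pow (by norm_num) _
      rw [← pow_add]
      congr 1; omega
    have e4 : q ^ (2 * ∑ m ∈ Ico p (M + 1), t (2 * m + 1)) =
        q ^ (2 * ∑ m ∈ Ico p M, t (2 * m + 1)) *
          (if M < p then 1 else (q ^ 2) ^ t (2 * M + 1)) := by
      split_ifs with h
      · rw [Ico_eq_empty (by omega), Ico_eq_empty (by omega)]; simp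
      · rw [sum_Ico_succ_top (by omega)]; ring
    rw [e1, e2]
    simp only [pow_add q, e4] at e3 ⊢
    linear_combination (a ^ (∑ x ∈ range (2 * M), t x) * q ^ (∑ x ∈ range (2 * M), t x ^ 2) *
      q ^ (2 * ∑ m ∈ Ico p M, t (2 * m + 1)) * q ^ (∑ x ∈ range M, (t (2 * x) - t (2 * x + 1))) *
      a ^ t (2 * M) * a ^ t (2 * M + 1) * (if M < p then 1 else (q ^ 2) ^ t (2 * M + 1))) * e3

lemma ext_antitone {N : ℕ} {s : Fin N → ℕ} (hs : Antitone s) (m : ℕ) :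
    ext N s (m + 1) ≤ ext N s m := by
  unfold ext
  split_ifs with h1 h2
  · exact hs (by simp [Fin.le_def])
  · omega
  · omega
  · exact le_rfl

lemma wp_bound {Q a : ℂ} (h : ‖Q‖ < 1) (p m x : ℕ) :
    ‖wp Q a p m x‖ ≤ ‖a ^ 2‖ ^ x * ‖Q‖ ^ (x ^ 2) := by
  rw [wp, norm_mul, norm_mul, norm_pow (a ^ 2), norm_pow Q]
  apply mul_le_of_le_one_right (by positivity)
  split_ifs
  · simp
  · rw [norm_pow]; exact pow_le_one₀ (norm_nonneg _) h.le

lemma w3_bound {q a : ℂ} (h0 : 0 < ‖q‖) (h : ‖q‖ < 1) (p m x : ℕ) :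
    ‖w3 (q ^ 2) q a p m x‖ ≤ (‖a‖ / ‖q‖) ^ x * ‖q‖ ^ (x ^ 2) := by
  have hx : x ≤ x ^ 2 := Nat.le_self_pow (by norm_num) _
  have e : (‖a‖ / ‖q‖) ^ x * ‖q‖ ^ (x ^ 2) = ‖a‖ ^ x * ‖q‖ ^ (x ^ 2 - x) := by
    obtain ⟨y, hy⟩ := Nat.exists_eq_add_of_le hx
    rw [hy, Nat.add_sub_cancel_left, div_pow, pow_add]
    field_simp
  rw [e, w3]
  split_ifs
  · rw [norm_mul, norm_pow, norm_pow]
    exact mul_le_mul_of_nonneg_left (pow_le_pow_of_le_one h0.le h.le (by omega)) (by positivity)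
  · simp
  · rw [norm_mul, norm_mul, norm_pow, norm_pow]
    apply mul_le_of_le_one_right (by positivity)
    rw [norm_pow, norm_pow]
    exact pow_le_one₀ (by positivity) (pow_le_one₀ h0.le h.le)

/-- coefficients in the single sum -/
noncomputable def Cf (Q a : ℂ) (j p r : ℕ) : ℂ :=
  W Q a r * ((a ^ 2 * Q) ^ r * Q ^ (r ^ 2)) ^ j * ((a ^ 2) ^ r * Q ^ (r ^ 2)) ^ p

lemma Cf_summable {Q a : ℂ} (h : ‖Q‖ < 1) (j p : ℕ) :
    Summable (fun r => ‖Cf Q a j p r‖) := by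
  obtain ⟨C, hC, h1⟩ := bdd_of_tendsto (invQ_tendsto h)
  obtain ⟨D, hD, h2⟩ := bdd_of_tendsto (qPoch_tendsto h (a ^ 2 * Q))
  have hs := (summable_gauss (‖a‖ * ‖a ^ 2‖ ^ j * ‖a ^ 2‖ ^ p) ‖Q‖ (by positivity)
    (norm_nonneg _) h).mul_left (D * C)
  refine Summable.of_nonneg_of_le (fun r => norm_nonneg _) (fun r => ?_) hs
  have hq : ∀ n : ℕ, ‖Q‖ ^ n ≤ 1 := fun n => pow_le_one₀ (norm_nonneg _) h.le
  have b1 : ‖((a ^ 2 * Q) ^ r * Q ^ (r ^ 2)) ^ j‖ ≤ (‖a ^ 2‖ ^ r) ^ j := by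
    rw [norm_pow, norm_mul, norm_pow, norm_mul, norm_pow Q, mul_pow (‖a ^ 2‖) ‖Q‖ r, mul_assoc]
    apply pow_le_pow_left₀ (by positivity)
    apply mul_le_of_le_one_right (by positivity)
    exact mul_le_one₀ (hq _) (by positivity) (hq _)
  have b2 : ‖((a ^ 2) ^ r * Q ^ (r ^ 2)) ^ p‖ ≤ (‖a ^ 2‖ ^ r) ^ p := by
    rw [norm_pow, norm_mul, norm_pow, norm_pow Q]
    apply pow_le_pow_left₀ (by positivity)
    exact mul_le_of_le_one_right (by positivity) (hq _)
  rw [Cf, norm_mul, norm_mul, W, norm_mul, norm_mul, norm_mul, norm_pow, norm_pow, norm_neg]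
  calc _ ≤ ‖a‖ ^ r * ‖Q‖ ^ (r ^ 2) * D * C * (‖a ^ 2‖ ^ r) ^ j * (‖a ^ 2‖ ^ r) ^ p := by
        gcongr
        · exact h2 _
        · exact h1 _
    _ = _ := by ring

lemma one_lim {Q a : ℂ} (h : ‖Q‖ < 1)
    (hA : ∀ m : ℕ, 1 ≤ m → a ^ 2 * Q ^ m ≠ 1) (hA' : ∀ m : ℕ, 1 ≤ m → -a * Q ^ m ≠ 1)
    (j p : ℕ) :
    Tendsto (fun L => qPoch Q Q L * F Q (p + j) (wp Q a p) (g2 Q a) L) atTop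
      (𝓝 ((qPochInf (a ^ 2 * Q) Q)⁻¹ *
        ∑' r, Cf Q a j p r * (1 - (a ^ 2 * Q ^ (2 * r + 1)) ^ (p + 1)))) := by
  have hQ := pow_ne_one' h
  obtain ⟨B, hB, h1⟩ := K_bdd h
  obtain ⟨D, hD, h2⟩ := bdd_of_tendsto (qPoch_tendsto h Q)
  obtain ⟨E, hE, h3⟩ := bdd_of_tendsto (inv_tendsto h hA)
  have e : ∀ L, qPoch Q Q L * F Q (p + j) (wp Q a p) (g2 Q a) L =
      ∑' r, Cf Q a j p r * (qPoch Q Q L * u Q (a ^ 2) r L -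
        (a ^ 2 * Q ^ (2 * r + 1)) ^ (p + 1) * (qPoch Q Q L * u Q (a ^ 2) (r + 1) L)) := by
    intro L
    rw [tsum_eq_sum (s := range (L + 1)), F_two hQ hA hA' j p L (L + 1) (by omega), mul_sum]
    · apply sum_congr rfl; intro r _; rw [Cf]; ring
    · intro r hr
      have : L < r := by simpa using hr
      rw [u, u, K_zero this, K_zero (by omega)]; simp
  simp only [e]
  have hu : ∀ r, Tendsto (fun L => qPoch Q Q L * u Q (a ^ 2) r L) atTop
      (𝓝 (qPochInf (a ^ 2 * Q) Q)⁻¹) := by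
    intro r
    have := (K_tendsto h r).mul ((inv_tendsto h hA).comp (tendsto_add_atTop_nat r))
    rw [one_mul] at this
    refine this.congr ?_
    intro L
    simp only [u, Function.comp]; ring
  have hub : ∀ r L, ‖qPoch Q Q L * u Q (a ^ 2) r L‖ ≤ D * (B * E) := by
    intro r L
    rw [u, norm_mul, norm_mul]
    gcongr
    · exact h2 _
    · exact h1 _ _
    · exact h3 _
  rw [← tsum_mul_left]
  refine tendsto_tsum_of_dominated_convergence
    (bound := fun r => ‖Cf Q a j p r‖ * (D * (B * E) + ‖a ^ 2‖ ^ (p + 1) * (D * (B * E))))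
    ((Cf_summable h j p).mul_right _) ?_ ?_
  · intro r
    have := ((hu r).sub ((hu (r + 1)).const_mul
      ((a ^ 2 * Q ^ (2 * r + 1)) ^ (p + 1)))).const_mul (Cf Q a j p r)
    convert this using 2
    ring
  · filter_upwards with L r
    rw [norm_mul]
    gcongr
    refine (norm_sub_le _ _).trans ?_
    rw [norm_mul ((a ^ 2 * Q ^ (2 * r + 1)) ^ (p + 1))]
    gcongr
    · exact hub _ _
    · rw [norm_pow, norm_mul]
      apply pow_le_pow_left₀ (by positivity)
      apply mul_le_of_le_one_right (by positivity)
      rw [norm_pow]; exact pow_le_one₀ (norm_nonneg _) h.le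
    · exact hub _ _

end T52

/-- Theorem 5.2 (with `q` replaced by `q²` and `a` by `a²`).  In the second sum the tuple
encodes `s_1 ≥ ⋯ ≥ s_{k-1} ≥ 0` via `s_m = t (m-1)` (with `s_k = 0`), and in the third sum
`s_1 ≥ ⋯ ≥ s_{2k-2} ≥ 0` via `s_m = t (m-1)` (with `s_{2k-1} = 0`); there
`S = s_1 - s_2 + s_3 - s_4 + ⋯ + s_{2k-3} - s_{2k-2}` is written as
`∑_{m<k-1} (t (2m) - t (2m+1))`, where the subtractions are exact by antitonicity. -/
theorem theorem_5_2 (q a : ℂ) (h0 : 0 < ‖q‖) (h1 : ‖q‖ < 1)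
    (ha : ∀ m : ℕ, 1 ≤ m → a ^ 2 * q ^ (2 * m) ≠ 1)
    (k i : ℕ) (hk : 2 ≤ k) (hi1 : 1 ≤ i) (hik : i ≤ k) :
    (qPochInf (-(a * q ^ 2)) (q ^ 2) / qPochInf (a ^ 2 * q ^ 2) (q ^ 2) *
      ∑' n : ℕ, (-1 : ℂ) ^ n * a ^ ((2 * k - 1) * n) *
        q ^ (2 * k * n ^ 2 + (2 * k - 2 * i) * n) *
        (1 - a ^ (2 * i) * q ^ (2 * i * (2 * n + 1))) *
        qPoch (a ^ 2 * q ^ 2) (q ^ 2) n / qPoch (q ^ 2) (q ^ 2) n) =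
      (qPochInf (-(a * q ^ 2)) (q ^ 2) *
        ∑' s : {s : Fin (k - 1) → ℕ // Antitone s},
          (let t : ℕ → ℕ := fun m => if h : m < k - 1 then s.1 ⟨m, h⟩ else 0
           a ^ (2 * ∑ m ∈ Finset.range (k - 1), t m) *
             q ^ (2 * ∑ m ∈ Finset.range (k - 1), (t m) ^ 2 +
                  2 * ∑ m ∈ Finset.Ico (i - 1) (k - 1), t m) /
             ((∏ m ∈ Finset.range (k - 1), qPoch (q ^ 2) (q ^ 2) (t m - t (m + 1))) *
               qPoch (-(a * q ^ 2)) (q ^ 2) (t (k - 2))))) ∧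
    (qPochInf (-(a * q ^ 2)) (q ^ 2) *
        ∑' s : {s : Fin (k - 1) → ℕ // Antitone s},
          (let t : ℕ → ℕ := fun m => if h : m < k - 1 then s.1 ⟨m, h⟩ else 0
           a ^ (2 * ∑ m ∈ Finset.range (k - 1), t m) *
             q ^ (2 * ∑ m ∈ Finset.range (k - 1), (t m) ^ 2 +
                  2 * ∑ m ∈ Finset.Ico (i - 1) (k - 1), t m) /
             ((∏ m ∈ Finset.range (k - 1), qPoch (q ^ 2) (q ^ 2) (t m - t (m + 1))) *
               qPoch (-(a * q ^ 2)) (q ^ 2) (t (k - 2))))) =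
      (∑' s : {s : Fin (2 * k - 2) → ℕ // Antitone s},
        (let t : ℕ → ℕ := fun m => if h : m < 2 * k - 2 then s.1 ⟨m, h⟩ else 0
         a ^ (∑ m ∈ Finset.range (2 * k - 2), t m) *
           q ^ (∑ m ∈ Finset.range (2 * k - 2), (t m) ^ 2 +
                2 * ∑ m ∈ Finset.Ico (i - 1) (k - 1), t (2 * m + 1) +
                ∑ m ∈ Finset.range (k - 1), (t (2 * m) - t (2 * m + 1))) /
           ∏ m ∈ Finset.range (2 * k - 2), qPoch (q ^ 2) (q ^ 2) (t m - t (m + 1)))) := by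
  have hQ : ‖q ^ 2‖ < 1 := by
    rw [norm_pow]; exact pow_lt_one₀ h0.le h1 (by norm_num)
  have hA : ∀ m : ℕ, 1 ≤ m → a ^ 2 * (q ^ 2) ^ m ≠ 1 := by
    intro m hm; rw [← pow_mul]; exact ha m hm
  have hA' : ∀ m : ℕ, 1 ≤ m → -a * (q ^ 2) ^ m ≠ 1 := by
    intro m hm he
    apply ha (2 * m) (by omega)
    calc a ^ 2 * q ^ (2 * (2 * m)) = (-a * (q ^ 2) ^ m) ^ 2 := by ring
      _ = 1 := by rw [he]; norm_num
  obtain ⟨p, rfl⟩ : ∃ p, i = p + 1 := ⟨i - 1, by omega⟩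
  obtain ⟨j, rfl⟩ : ∃ j, k = p + j + 1 := ⟨k - (p + 1), by omega⟩
  have hpj : 1 ≤ p + j := by omega
  obtain ⟨C, hC, hC1⟩ := T52.bdd_of_tendsto (T52.invQ_tendsto hQ)
  obtain ⟨D, hD, hD1⟩ := T52.bdd_of_tendsto (T52.inv_tendsto hQ hA')
  have hg2 : ∀ x, ‖(qPoch (q ^ 2) (q ^ 2) x)⁻¹ * (qPoch (-a * q ^ 2) (q ^ 2) x)⁻¹‖ ≤ C * D := by
    intro x
    rw [norm_mul]
    exact mul_le_mul (hC1 x) (hD1 x) (norm_nonneg _) hC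
  have hg3 : ∀ x, ‖(qPoch (q ^ 2) (q ^ 2) x)⁻¹ * 1‖ ≤ C := by
    intro x; rw [mul_one]; exact hC1 x
  have L1 := T52.one_lim hQ hA hA' j p
  have L2 := T52.tuple_lim (h := fun x => (qPoch (-a * q ^ 2) (q ^ 2) x)⁻¹) hQ
    (T52.summable_gauss ‖a ^ 2‖ ‖q ^ 2‖ (norm_nonneg _) (norm_nonneg _) hQ)
    (fun x => by positivity) hg2 (p + j + 1 - 1) hpj (T52.wp (q ^ 2) a p)
    (fun m x => T52.wp_bound hQ p m x)
  have L3 := T52.tuple_lim (h := fun _ => 1) hQ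
    (T52.summable_gauss (‖a‖ / ‖q‖) ‖q‖ (by positivity) (norm_nonneg _) h1)
    (fun x => by positivity) hg3 (2 * (p + j + 1) - 2) (by omega) (T52.w3 (q ^ 2) q a p)
    (fun m x => T52.w3_bound h0 h1 p m x)
  have U12 := tendsto_nhds_unique L1 L2
  have L3' := (T52.qPoch_tendsto hQ (-a * q ^ 2)).mul L2
  have U23 := tendsto_nhds_unique L3' (L3.congr (fun L => by
    have e : 2 * (p + j + 1) - 2 = 2 * (p + j) := by omega
    have e2 := T52.F_three (T52.pow_ne_one' hQ) hA' q rfl (p + j) p L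
    have e3 : (fun x => (qPoch (q ^ 2) (q ^ 2) x)⁻¹ * 1) = T52.g3 (q ^ 2) := by
      funext x; rw [mul_one]; rfl
    rw [e, e3, e2, mul_left_comm]
    rfl))
  obtain ⟨S1, hS1⟩ : ∃ S, S = (qPochInf (a ^ 2 * q ^ 2) (q ^ 2))⁻¹ *
      ∑' r, T52.Cf (q ^ 2) a j p r * (1 - (a ^ 2 * (q ^ 2) ^ (2 * r + 1)) ^ (p + 1)) := ⟨_, rfl⟩
  rw [← U12] at U23
  rw [← hS1] at U12 U23
  have neg : -(a * q ^ 2) = -a * q ^ 2 := by ring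
  have E2 : (∑' s : {s : Fin (p + j + 1 - 1) → ℕ // Antitone s},
          (let t : ℕ → ℕ := fun m => if h : m < p + j + 1 - 1 then s.1 ⟨m, h⟩ else 0
           a ^ (2 * ∑ m ∈ Finset.range (p + j + 1 - 1), t m) *
             q ^ (2 * ∑ m ∈ Finset.range (p + j + 1 - 1), (t m) ^ 2 +
                  2 * ∑ m ∈ Finset.Ico (p + 1 - 1) (p + j + 1 - 1), t m) /
             ((∏ m ∈ Finset.range (p + j + 1 - 1), qPoch (q ^ 2) (q ^ 2) (t m - t (m + 1))) *
               qPoch (-(a * q ^ 2)) (q ^ 2) (t (p + j + 1 - 2))))) = S1 := by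
    refine (tsum_congr fun s => ?_).trans U12.symm
    rw [T52.term_two, neg, div_eq_mul_inv, mul_inv, ← mul_assoc]
    rfl
  have E3 : (∑' s : {s : Fin (2 * (p + j + 1) - 2) → ℕ // Antitone s},
        (let t : ℕ → ℕ := fun m => if h : m < 2 * (p + j + 1) - 2 then s.1 ⟨m, h⟩ else 0
         a ^ (∑ m ∈ Finset.range (2 * (p + j + 1) - 2), t m) *
           q ^ (∑ m ∈ Finset.range (2 * (p + j + 1) - 2), (t m) ^ 2 +
                2 * ∑ m ∈ Finset.Ico (p + 1 - 1) (p + j + 1 - 1), t (2 * m + 1) +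
                ∑ m ∈ Finset.range (p + j + 1 - 1), (t (2 * m) - t (2 * m + 1))) /
           ∏ m ∈ Finset.range (2 * (p + j + 1) - 2),
            qPoch (q ^ 2) (q ^ 2) (t m - t (m + 1)))) =
      qPochInf (-a * q ^ 2) (q ^ 2) * S1 := by
    refine (tsum_congr fun s => ?_).trans U23.symm
    have := T52.term_three q a p (p + j) _
      (T52.ext_antitone (N := 2 * (p + j + 1) - 2) (s := s.1) s.2)
    rw [show Finset.range (2 * (p + j + 1) - 2) = Finset.range (2 * (p + j)) by
      congr 1]
    rw [this, mul_one, div_eq_mul_inv]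
    rfl
  rw [E2, E3, neg]
  refine ⟨?_, rfl⟩
  rw [hS1, div_eq_mul_inv, mul_assoc]
  congr 2
  apply tsum_congr
  intro r
  rw [T52.Cf, T52.W, show 2 * (p + j + 1) - 1 = 2 * (p + j) + 1 by omega,
    show 2 * (p + j + 1) - 2 * (p + 1) = 2 * j by omega, div_eq_mul_inv]
  rw [neg_pow]
  ring
end

section
/- (Stembridge's identity (I14).) Let q be a complex number with 0 < |q| < 1 and let k ≥ 1 be an integer. Then (q;q)_∞ · ∑_{s_1 ≥ s_2 ≥ ⋯ ≥ s_k ≥ 0} q^{s_1^2 + ⋯ + s_k^2 - s_1 + s_2 + ⋯ + s_k} (1 - q^{2 s_1}) / [(q;q)_{s_1-s_2} (q;q)_{s_2-s_3} ⋯ (q;q)_{s_{k-1}-s_k} (q;q)_{s_k}] = (q^3, q^{2k}, q^{2k+3}; q^{2k+3})_∞. -/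
open Filter Topology

noncomputable def rc (q : ℂ) (m : ℤ) : ℂ := if 0 ≤ m then (qPoch q q m.toNat)⁻¹ else 0

lemma one_sub_pow_ne {q : ℂ} (h1 : ‖q‖ < 1) (n : ℕ) (hn : n ≠ 0) : 1 - q ^ n ≠ 0 := by
  intro h
  have h2 : q ^ n = 1 := (sub_eq_zero.mp h).symm
  have h3 : ‖q‖ ^ n < 1 := pow_lt_one₀ (norm_nonneg _) h1 hn
  rw [← norm_pow, h2, norm_one] at h3
  exact lt_irrefl _ h3

lemma qPoch_succ (x q : ℂ) (n : ℕ) : qPoch x q (n + 1) = qPoch x q n * (1 - x * q ^ n) := by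
  simp [qPoch, Finset.prod_range_succ]

lemma qPoch_ne {q : ℂ} (h1 : ‖q‖ < 1) (n : ℕ) : qPoch q q n ≠ 0 := by
  unfold qPoch
  refine Finset.prod_ne_zero_iff.mpr fun j _ => ?_
  rw [← pow_succ']
  exact one_sub_pow_ne h1 _ (by omega)

lemma rc_neg (q : ℂ) {m : ℤ} (hm : m < 0) : rc q m = 0 := by
  simp [rc, not_le.mpr hm]

lemma rc_nat (q : ℂ) (n : ℕ) : rc q (n : ℤ) = (qPoch q q n)⁻¹ := by
  simp [rc]

lemma rc_zero (q : ℂ) : rc q 0 = 1 := by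
  simp [rc, qPoch]

lemma rc_rec {q : ℂ} (h1 : ‖q‖ < 1) (m : ℤ) : rc q (m - 1) = (1 - q ^ m) * rc q m := by
  rcases lt_trichotomy m 0 with h | h | h
  · rw [rc_neg q h, rc_neg q (by omega)]; simp
  · subst h; rw [rc_neg q (by omega)]; simp
  · obtain ⟨n, rfl⟩ : ∃ n : ℕ, m = (n : ℤ) + 1 := ⟨(m - 1).toNat, by omega⟩
    have e : (n : ℤ) + 1 = ((n + 1 : ℕ) : ℤ) := by push_cast; rfl
    rw [add_sub_cancel_right, e, rc_nat, rc_nat, qPoch_succ, zpow_natCast]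
    have h2 := qPoch_ne h1 n
    have h3 := one_sub_pow_ne h1 (n + 1) (by omega)
    rw [pow_succ'] at h3 ⊢
    field_simp

lemma summ_geo {q : ℂ} (h1 : ‖q‖ < 1) (x : ℂ) : Summable fun j : ℕ => ‖-(x * q ^ j)‖ := by
  simp only [norm_neg, norm_mul, norm_pow]
  exact (summable_geometric_of_lt_one (norm_nonneg _) h1).mul_left _

lemma qPoch_tendsto {q : ℂ} (h1 : ‖q‖ < 1) (x : ℂ) :
    Tendsto (qPoch x q) atTop (𝓝 (qPochInf x q)) := by
  have h := multipliable_one_add_of_summable (summ_geo h1 x)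
  have := h.hasProd.tendsto_prod_nat
  have e : qPoch x q = fun n => ∏ i ∈ Finset.range n, (1 + -(x * q ^ i)) := by
    funext n; simp [qPoch, sub_eq_add_neg]
  rw [e]
  simpa [qPochInf, sub_eq_add_neg] using this

lemma qPochInf_ne {q : ℂ} (h1 : ‖q‖ < 1) : qPochInf q q ≠ 0 := by
  have := tprod_one_add_ne_zero_of_summable (f := fun j : ℕ => -(q * q ^ j)) ?_ (summ_geo h1 q)
  · simpa [qPochInf, sub_eq_add_neg] using this
  · intro j
    rw [← pow_succ', ← sub_eq_add_neg]
    exact one_sub_pow_ne h1 _ (by omega)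

lemma rc_tendsto {q : ℂ} (h1 : ‖q‖ < 1) (c : ℤ) :
    Tendsto (fun n : ℕ => rc q (n + c)) atTop (𝓝 (qPochInf q q)⁻¹) := by
  have h := (qPoch_tendsto h1 q).inv₀ (qPochInf_ne h1)
  have h2 : Tendsto (fun n : ℕ => ((n : ℤ) + c).toNat) atTop atTop := by
    refine tendsto_atTop.mpr fun b => ?_
    filter_upwards [eventually_ge_atTop (b + c.natAbs)] with n hn
    omega
  refine (h.comp h2).congr' ?_
  filter_upwards [eventually_ge_atTop (c.natAbs)] with n hn
  have : 0 ≤ (n : ℤ) + c := by omega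
  simp [rc, this]

lemma rc_bdd {q : ℂ} (h1 : ‖q‖ < 1) : ∃ C : ℝ, 0 ≤ C ∧ ∀ m : ℤ, ‖rc q m‖ ≤ C := by
  have h := (rc_tendsto h1 0).norm.bddAbove_range
  obtain ⟨C, hC⟩ := h
  have hC' : ∀ n : ℕ, ‖rc q n‖ ≤ C := fun n => by
    have := hC ⟨n, rfl⟩
    simpa using this
  have h0 : 0 ≤ C := (norm_nonneg _).trans (hC' 0)
  refine ⟨C, h0, fun m => ?_⟩
  rcases lt_or_ge m 0 with h | h
  · rw [rc_neg q h]; simpa using h0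
  · obtain ⟨n, rfl⟩ := Int.eq_ofNat_of_zero_le h
    exact hC' n

/-- triangular exponent -/
def tri (r : ℤ) : ℤ := r * (r - 1) / 2

lemma two_tri (r : ℤ) : 2 * tri r = r * (r - 1) := by
  unfold tri
  exact Int.mul_ediv_cancel' (by
    have := (Int.even_mul_pred_self r).two_dvd
    simpa using this)

lemma tri_succ (r : ℤ) : tri (r + 1) = tri r + r := by
  have h1 := two_tri r
  have h2 := two_tri (r + 1)
  have : (r + 1) * (r + 1 - 1) = r * (r - 1) + 2 * r := by ring
  omega

lemma summ_quad {q : ℂ} (h0 : q ≠ 0) (h1 : ‖q‖ < 1) (e : ℤ → ℤ) (c : ℤ)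
    (h : ∀ n, |n| ≤ e n + c) : Summable fun n : ℤ => ‖q ^ e n‖ := by
  have hq0 : 0 < ‖q‖ := norm_pos_iff.mpr h0
  have hs : Summable fun n : ℤ => ‖q‖ ^ (n.natAbs) := by
    refine Summable.of_nat_of_neg ?_ ?_ <;>
    simpa using summable_geometric_of_lt_one (norm_nonneg _) h1
  refine Summable.of_nonneg_of_le (fun _ => norm_nonneg _) (fun n => ?_) (hs.mul_left (‖q‖ ^ (-c)))
  rw [norm_zpow, ← zpow_natCast, ← zpow_add₀ hq0.ne']
  refine zpow_le_zpow_right_of_le_one₀ hq0 h1.le ?_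
  have := h n
  rw [Int.natCast_natAbs]
  linarith

/-- one factor of bounded stuff -/
lemma summ_mul_bdd {ι : Type*} {f g : ι → ℂ} {C : ℝ} (hf : Summable fun i => ‖f i‖)
    (hg : ∀ i, ‖g i‖ ≤ C) : Summable fun i => f i * g i := by
  refine Summable.of_norm_bounded (hf.mul_right C) fun i => ?_
  rw [norm_mul]
  exact mul_le_mul_of_nonneg_left (hg i) (norm_nonneg _)

/-- bilateral series finite form -/
noncomputable def jx (a p : ℂ) (r : ℤ) : ℂ := (-a) ^ r * p ^ tri r

lemma jx_succ {a p : ℂ} (ha : a ≠ 0) (hp : p ≠ 0) (r : ℤ) :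
    jx a p (r + 1) = -a * p ^ r * jx a p r := by
  unfold jx
  rw [tri_succ, zpow_add₀ hp, zpow_add_one₀ (neg_ne_zero.mpr ha)]
  ring

lemma jL_step {a b p : ℂ} (ha : a ≠ 0) (hp : p ≠ 0) (hp1 : ‖p‖ < 1) (hab : a * b = p)
    (hx : Summable fun r : ℤ => ‖jx a p r‖) (n : ℤ) :
    (1 - p ^ (2 * n + 2)) * (1 - p ^ (2 * n + 3)) *
      ∑' r : ℤ, jx a p r * (rc p (n + 1 - r) * rc p (n + 2 + r)) =
    (1 - a * p ^ n) * (1 - b * p ^ (n + 1)) *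
      ∑' r : ℤ, jx a p r * (rc p (n - r) * rc p (n + 1 + r)) := by
  obtain ⟨C, hC0, hC⟩ := rc_bdd hp1
  have hb : ∀ m k : ℤ → ℤ, ∀ i, ‖rc p (m i) * rc p (k i)‖ ≤ C * C := fun m k i => by
    rw [norm_mul]; exact mul_le_mul (hC _) (hC _) (norm_nonneg _) hC0
  have hA : HasSum _ _ := (summ_mul_bdd hx (hb (fun r => n - r) (fun r => n + 1 + r))).hasSum
  have hB : HasSum _ _ := (summ_mul_bdd hx (hb (fun r => n + 1 - r) (fun r => n + 2 + r))).hasSum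
  have s1 := ((Equiv.addRight (-1 : ℤ)).hasSum_iff).mpr (hA.mul_left (-(a * p ^ n)))
  have s2 := ((Equiv.addRight (1 : ℤ)).hasSum_iff).mpr (hA.mul_left (-(b * p ^ (n + 1))))
  have s0 := hA.mul_left (1 + p ^ (2 * n + 2))
  have s := (s0.add s1).add s2
  have t := hB.mul_left ((1 - p ^ (2 * n + 2)) * (1 - p ^ (2 * n + 3)))
  have hfun : ∀ r : ℤ, (1 - p ^ (2 * n + 2)) * (1 - p ^ (2 * n + 3)) *
      (jx a p r * (rc p (n + 1 - r) * rc p (n + 2 + r))) =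
      (1 + p ^ (2 * n + 2)) * (jx a p r * (rc p (n - r) * rc p (n + 1 + r))) +
      -(a * p ^ n) * (jx a p (r + -1) * (rc p (n - (r + -1)) * rc p (n + 1 + (r + -1)))) +
      -(b * p ^ (n + 1)) * (jx a p (r + 1) * (rc p (n - (r + 1)) * rc p (n + 1 + (r + 1)))) := by
    intro r
    have j1 : -(a * p ^ n) * jx a p (r + -1) = p ^ (n + 1 - r) * jx a p r := by
      have := jx_succ ha hp (r + -1)
      rw [neg_add_cancel_right] at this
      rw [this]
      have e : p ^ n = p ^ (n + 1 - r) * p ^ (r + -1) := by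
        rw [← zpow_add₀ hp]; congr 1; ring
      rw [e]; ring
    have j2 : -(b * p ^ (n + 1)) * jx a p (r + 1) = p ^ (n + 2 + r) * jx a p r := by
      rw [jx_succ ha hp r]
      have e : p ^ (n + 2 + r) = p ^ (n + 1) * p ^ r * p := by
        rw [← zpow_add₀ hp, ← zpow_add_one₀ hp]; congr 1; ring
      rw [e]; linear_combination p ^ (n + 1) * p ^ r * jx a p r * hab
    have r1 : rc p (n - r) = (1 - p ^ (n + 1 - r)) * rc p (n + 1 - r) := by
      rw [← rc_rec hp1]; congr 1; ring
    have r2 : rc p (n - (r + 1)) = (1 - p ^ (n + 1 - r) / p) * rc p (n - r) := by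
      rw [div_eq_mul_inv, ← zpow_sub_one₀ hp]
      have e : n + 1 - r - 1 = n - r := by ring
      rw [e, ← rc_rec hp1]; congr 1; ring
    have r3 : rc p (n + 1 + r) = (1 - p ^ (n + 2 + r)) * rc p (n + 2 + r) := by
      rw [← rc_rec hp1]; congr 1; ring
    have r4 : rc p (n + 1 + (r + -1)) = (1 - p ^ (n + 2 + r) / p) * rc p (n + 1 + r) := by
      rw [div_eq_mul_inv, ← zpow_sub_one₀ hp]
      have e : n + 2 + r - 1 = n + 1 + r := by ring
      rw [e, ← rc_rec hp1]; congr 1; ring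
    have e5 : n - (r + -1) = n + 1 - r := by ring
    have e6 : n + 1 + (r + 1) = n + 2 + r := by ring
    rw [← mul_assoc (-(a * p ^ n)), ← mul_assoc (-(b * p ^ (n + 1))), j1, j2, r2, r4, r1, r3, e5, e6]
    have e7 : p ^ (2 * n + 3) = p ^ (n + 1 - r) * p ^ (n + 2 + r) := by
      rw [← zpow_add₀ hp]; congr 1; ring
    have e8 : p ^ (2 * n + 2) = p ^ (n + 1 - r) * p ^ (n + 2 + r) / p := by
      rw [← e7, div_eq_mul_inv, ← zpow_sub_one₀ hp]; congr 1; ring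
    rw [e7, e8]
    generalize p ^ (n + 1 - r) = u
    generalize p ^ (n + 2 + r) = v
    field_simp
    ring
  have key := t.unique (s.congr_fun hfun)
  rw [key]
  have e1 : p ^ (2 * n + 2) = (a * p ^ n) * (b * p ^ (n + 1)) := by
    rw [mul_mul_mul_comm, hab, ← zpow_add₀ hp, ← zpow_one_add₀ hp]; congr 1; ring
  rw [e1]; ring

lemma jL_eval {a b p : ℂ} (ha : a ≠ 0) (hp : p ≠ 0) (hp1 : ‖p‖ < 1) (hab : a * b = p)
    (hx : Summable fun r : ℤ => ‖jx a p r‖) (n : ℕ) :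
    qPoch p p (2 * n + 1) * ∑' r : ℤ, jx a p r * (rc p (n - r) * rc p (n + 1 + r)) =
      qPoch a p n * qPoch b p (n + 1) := by
  induction n with
  | zero =>
    have hz : ∀ r ∉ ({0, -1} : Finset ℤ), jx a p r * (rc p ((0 : ℕ) - r) * rc p ((0 : ℕ) + 1 + r)) = 0 := by
      intro r hr
      simp only [Finset.mem_insert, Finset.mem_singleton, not_or] at hr
      rcases lt_or_ge 0 r with h | h
      · rw [rc_neg p (by push_cast; omega : ((0 : ℕ) : ℤ) - r < 0)]; simp
      · rw [rc_neg p (by push_cast; omega : ((0 : ℕ) : ℤ) + 1 + r < 0)]; simp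
    rw [tsum_eq_sum hz, Finset.sum_pair (by norm_num)]
    have q1 : rc p 1 = (qPoch p p 1)⁻¹ := rc_nat p 1
    have hne := qPoch_ne hp1 1
    have t1 : tri 0 = 0 := by decide
    have t2 : tri (-1) = 1 := by decide
    simp [rc_zero, q1, jx, t1, t2]
    have : a⁻¹ * p = b := by rw [← hab]; field_simp
    rw [this]
    simp [qPoch] at hne ⊢
    field_simp
    ring
  | succ n ih =>
    have h := jL_step ha hp hp1 hab hx n
    have e : 2 * (n + 1) + 1 = (2 * n + 1) + 1 + 1 := by ring
    have e1 : ((n + 1 : ℕ) : ℤ) + 1 = (n : ℤ) + 2 := by push_cast; ring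
    rw [e, qPoch_succ, qPoch_succ, e1]
    push_cast
    rw [qPoch_succ a, qPoch_succ b p (n + 1)]
    have p1 : (1 - p * p ^ (2 * n + 1)) = 1 - p ^ (2 * (n : ℤ) + 2) := by
      rw [← pow_succ', ← zpow_natCast]; push_cast; ring_nf
    have p2 : (1 - p * p ^ (2 * n + 1 + 1)) = 1 - p ^ (2 * (n : ℤ) + 3) := by
      rw [← pow_succ', ← zpow_natCast]; push_cast; ring_nf
    rw [p1, p2, mul_assoc, mul_assoc, ← mul_assoc (1 - _), h]
    have p3 : p ^ ((n : ℤ) + 1) = p ^ (n + 1) := by rw [← zpow_natCast]; push_cast; rfl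
    rw [p3, zpow_natCast]
    linear_combination (1 - a * p ^ n) * (1 - b * p ^ (n + 1)) * ih

lemma jtp {a b p : ℂ} (ha : a ≠ 0) (hp : p ≠ 0) (hp1 : ‖p‖ < 1) (hab : a * b = p)
    (hx : Summable fun r : ℤ => ‖jx a p r‖) :
    ∑' r : ℤ, jx a p r = qPochInf a p * qPochInf b p * qPochInf p p := by
  obtain ⟨C, hC0, hC⟩ := rc_bdd hp1
  have hlim : Tendsto (fun n : ℕ => ∑' r : ℤ, jx a p r * (rc p (n - r) * rc p (n + 1 + r))) atTop
      (𝓝 (∑' r : ℤ, jx a p r * ((qPochInf p p)⁻¹ * (qPochInf p p)⁻¹))) := by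
    refine tendsto_tsum_of_dominated_convergence (hx.mul_right (C * C)) (fun r => ?_)
      (Eventually.of_forall fun n r => ?_)
    · refine Tendsto.const_mul _ (Tendsto.mul ?_ ?_)
      · simpa [sub_eq_add_neg] using rc_tendsto hp1 (-r)
      · simpa [add_assoc] using rc_tendsto hp1 (1 + r)
    · rw [norm_mul, norm_mul]
      exact mul_le_mul_of_nonneg_left (mul_le_mul (hC _) (hC _) (norm_nonneg _) hC0) (norm_nonneg _)
  have h2 : Tendsto (fun n : ℕ => 2 * n + 1) atTop atTop :=
    tendsto_atTop.mpr fun b => by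
      filter_upwards [eventually_ge_atTop b] with n hn
      omega
  have hl := ((qPoch_tendsto hp1 p).comp h2).mul hlim
  have hr := (qPoch_tendsto hp1 a).mul ((tendsto_add_atTop_iff_nat 1).mpr (qPoch_tendsto hp1 b))
  have := tendsto_nhds_unique hl (hr.congr fun n => (jL_eval ha hp hp1 hab hx n).symm)
  rw [tsum_mul_right] at this
  have hne := qPochInf_ne hp1
  field_simp at this
  rw [this]
  ring

lemma summ_lin {q : ℂ} (h0 : q ≠ 0) (h1 : ‖q‖ < 1) (c d : ℤ) :
    Summable fun m : ℤ => ‖q ^ (m * (m + c) + d)‖ := by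
  refine summ_quad h0 h1 _ ((|c| + 1) ^ 2 - d) fun m => ?_
  have h2 : -(|c| * |m|) ≤ m * c := by
    rw [← abs_mul, mul_comm c m]; exact neg_abs_le _
  have h3 : m * m = |m| * |m| := (abs_mul_abs_self m).symm
  nlinarith [sq_nonneg (2 * |m| - (|c| + 1)), abs_nonneg c, abs_nonneg m]

lemma vand_step {q : ℂ} (h0 : q ≠ 0) (h1 : ‖q‖ < 1) (N c : ℤ) :
    (1 - q ^ N) * ∑' m : ℤ, q ^ (m * (m + c)) * (rc q (N - m) * rc q m * rc q (m + c)) =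
    ∑' m : ℤ, q ^ (m * (m + (c + 1))) * (rc q (N - 1 - m) * rc q m * rc q (m + (c + 1))) := by
  obtain ⟨C, hC0, hC⟩ := rc_bdd h1
  have hb : ∀ m k l : ℤ → ℤ, ∀ i, ‖rc q (m i) * rc q (k i) * rc q (l i)‖ ≤ C * C * C :=
    fun m k l i => by
    rw [norm_mul, norm_mul]
    exact mul_le_mul (mul_le_mul (hC _) (hC _) (norm_nonneg _) hC0) (hC _) (norm_nonneg _)
      (mul_nonneg hC0 hC0)
  have hG := summ_mul_bdd (summ_lin h0 h1 (c + 2) (c + 1))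
    (hb (fun m => N - 1 - m) (fun m => m) (fun m => m + (c + 1)))
  have hK := summ_mul_bdd (summ_lin h0 h1 (c + 1) 0)
    (hb (fun m => N - 1 - m) (fun m => m) (fun m => m + c))
  have hG' := (Equiv.addRight (-1 : ℤ)).summable_iff.mpr hG
  have eG := (Equiv.addRight (-1 : ℤ)).tsum_eq (fun m : ℤ =>
    q ^ (m * (m + (c + 2)) + (c + 1)) * (rc q (N - 1 - m) * rc q m * rc q (m + (c + 1))))
  calc _ = ∑' m : ℤ, ((q ^ ((m + -1) * ((m + -1) + (c + 2)) + (c + 1)) *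
          (rc q (N - 1 - (m + -1)) * rc q (m + -1) * rc q ((m + -1) + (c + 1)))) +
        q ^ (m * (m + (c + 1)) + 0) * (rc q (N - 1 - m) * rc q m * rc q (m + c))) := by
        rw [← tsum_mul_left]
        refine tsum_congr fun m => ?_
        have e1 : rc q (m + -1) = (1 - q ^ m) * rc q m := rc_rec h1 m
        have e2 : rc q (N - 1 - m) = (1 - q ^ (N - m)) * rc q (N - m) := by
          rw [← rc_rec h1]; congr 1; ring
        have e3 : N - 1 - (m + -1) = N - m := by ring
        have e4 : m + -1 + (c + 1) = m + c := by ring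
        have e5 : (m + -1) * ((m + -1) + (c + 2)) + (c + 1) = m * (m + c) := by ring
        have e6 : q ^ (m * (m + (c + 1)) + 0) = q ^ (m * (m + c)) * q ^ m := by
          rw [← zpow_add₀ h0]; congr 1; ring
        have e7 : q ^ N = q ^ m * q ^ (N - m) := by
          rw [← zpow_add₀ h0]; congr 1; ring
        rw [e1, e2, e3, e4, e5, e6, e7]
        ring
    _ = _ := by
        refine (Summable.tsum_add hG' hK).trans ?_
        refine (congrArg (· + _) eG).trans ?_
        rw [← Summable.tsum_add hG hK]
        refine tsum_congr fun m => ?_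
        have e1 : rc q (m + c) = (1 - q ^ (m + (c + 1))) * rc q (m + (c + 1)) := by
          rw [← rc_rec h1]; congr 1; ring
        have e2 : q ^ (m * (m + (c + 2)) + (c + 1)) = q ^ (m * (m + (c + 1))) * q ^ (m + (c + 1)) := by
          rw [← zpow_add₀ h0]; congr 1; ring
        rw [e1, e2, add_zero]
        ring

lemma vand_nat {q : ℂ} (h0 : q ≠ 0) (h1 : ‖q‖ < 1) (N : ℕ) : ∀ c : ℤ,
    ∑' m : ℤ, q ^ (m * (m + c)) * (rc q (N - m) * rc q m * rc q (m + c)) =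
      rc q N * rc q (N + c) := by
  induction N with
  | zero =>
    intro c
    rw [tsum_eq_single 0]
    · simp [rc_zero]
    · intro m hm
      rcases lt_or_gt_of_ne hm with h | h
      · rw [rc_neg q h]; simp
      · rw [rc_neg q (by push_cast; omega : ((0 : ℕ) : ℤ) - m < 0)]; simp
  | succ N ih =>
    intro c
    have h := vand_step h0 h1 ((N + 1 : ℕ) : ℤ) c
    have hne : 1 - q ^ ((N + 1 : ℕ) : ℤ) ≠ 0 := by
      rw [zpow_natCast]; exact one_sub_pow_ne h1 _ (by omega)
    apply mul_left_cancel₀ hne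
    rw [h, ← mul_assoc, ← rc_rec h1]
    have e : ((N + 1 : ℕ) : ℤ) - 1 = N := by push_cast; ring
    rw [e, ih (c + 1)]
    congr 2
    push_cast; ring

lemma vand {q : ℂ} (h0 : q ≠ 0) (h1 : ‖q‖ < 1) (N c : ℤ) :
    ∑' m : ℤ, q ^ (m * (m + c)) * (rc q (N - m) * rc q m * rc q (m + c)) =
      rc q N * rc q (N + c) := by
  rcases lt_or_ge N 0 with h | h
  · rw [rc_neg q h, zero_mul]
    convert tsum_zero with m
    rcases lt_or_ge m 0 with h' | h'
    · rw [rc_neg q h']; simp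
    · rw [rc_neg q (by omega : N - m < 0)]; simp
  · obtain ⟨n, rfl⟩ := Int.eq_ofNat_of_zero_le h
    exact vand_nat h0 h1 n c

lemma vand_inf {q : ℂ} (h0 : q ≠ 0) (h1 : ‖q‖ < 1) (c : ℤ) :
    ∑' m : ℤ, q ^ (m * (m + c)) * (rc q m * rc q (m + c)) = (qPochInf q q)⁻¹ := by
  obtain ⟨C, hC0, hC⟩ := rc_bdd h1
  have hs := (summ_lin h0 h1 c 0).mul_right (C * C * C)
  simp only [add_zero] at hs
  have hlim : Tendsto (fun n : ℕ => ∑' m : ℤ,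
      q ^ (m * (m + c)) * (rc q (n - m) * rc q m * rc q (m + c))) atTop
      (𝓝 (∑' m : ℤ, q ^ (m * (m + c)) * ((qPochInf q q)⁻¹ * rc q m * rc q (m + c)))) := by
    refine tendsto_tsum_of_dominated_convergence hs (fun r => ?_)
      (Eventually.of_forall fun n r => ?_)
    · refine Tendsto.const_mul _ (Tendsto.mul_const _ (Tendsto.mul_const _ ?_))
      simpa [sub_eq_add_neg] using rc_tendsto h1 (-r)
    · rw [norm_mul, norm_mul, norm_mul]
      exact mul_le_mul_of_nonneg_left (mul_le_mul (mul_le_mul (hC _) (hC _) (norm_nonneg _) hC0)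
        (hC _) (norm_nonneg _) (mul_nonneg hC0 hC0)) (norm_nonneg _)
  have hr : Tendsto (fun n : ℕ => rc q n * rc q (n + c)) atTop
      (𝓝 ((qPochInf q q)⁻¹ * (qPochInf q q)⁻¹)) := by
    refine Tendsto.mul ?_ (rc_tendsto h1 c)
    simpa using rc_tendsto h1 0
  have := tendsto_nhds_unique hlim (hr.congr fun n => (vand_nat h0 h1 n c).symm)
  apply mul_left_cancel₀ (inv_ne_zero (qPochInf_ne h1))
  rw [← this, ← tsum_mul_left]
  refine tsum_congr fun m => ?_
  ring

lemma vand' {q : ℂ} (h0 : q ≠ 0) (h1 : ‖q‖ < 1) (n r d : ℤ) :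
    ∑' s : ℤ, q ^ (s * (s + d)) * (rc q (n - s) * (rc q (s - r) * rc q (s + d + r))) =
      q ^ (r * (r + d)) * (rc q (n - r) * rc q (n + d + r)) := by
  have h := vand h0 h1 (n - r) (2 * r + d)
  rw [← (Equiv.subRight r).tsum_eq] at h
  have e : n + d + r = n - r + (2 * r + d) := by ring
  rw [e, ← h, ← tsum_mul_left]
  refine tsum_congr fun s => ?_
  simp only [Equiv.subRight_apply]
  have e1 : s * (s + d) = r * (r + d) + (s - r) * (s - r + (2 * r + d)) := by ring
  have e2 : n - r - (s - r) = n - s := by ring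
  have e3 : s - r + (2 * r + d) = s + d + r := by ring
  rw [e1, zpow_add₀ h0, e2, e3]
  ring

lemma vand_inf' {q : ℂ} (h0 : q ≠ 0) (h1 : ‖q‖ < 1) (r d : ℤ) :
    HasSum (fun s : ℤ => q ^ (s * (s + d)) * (rc q (s - r) * rc q (s + d + r)))
      (q ^ (r * (r + d)) * (qPochInf q q)⁻¹) := by
  obtain ⟨C, hC0, hC⟩ := rc_bdd h1
  have hs := summ_lin h0 h1 d 0
  simp only [add_zero] at hs
  have hsum : Summable (fun s : ℤ => q ^ (s * (s + d)) * (rc q (s - r) * rc q (s + d + r))) :=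
    summ_mul_bdd (C := C * C) hs fun s => by
      rw [norm_mul]; exact mul_le_mul (hC _) (hC _) (norm_nonneg _) hC0
  refine hsum.hasSum_iff.mpr ?_
  have h := vand_inf h0 h1 (2 * r + d)
  rw [← (Equiv.subRight r).tsum_eq] at h
  rw [← h, ← tsum_mul_left]
  refine tsum_congr fun s => ?_
  simp only [Equiv.subRight_apply]
  have e1 : s * (s + d) = r * (r + d) + (s - r) * (s - r + (2 * r + d)) := by ring
  have e3 : s - r + (2 * r + d) = s + d + r := by ring
  rw [e1, zpow_add₀ h0, e3]
  ring

lemma inner_tsum {q : ℂ} (h0 : q ≠ 0) (h1 : ‖q‖ < 1) (r : ℤ) :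
    ∑' n : ℤ, (q ^ (n * (n - 1)) - q ^ (n * (n + 1))) * (rc q (n - r) * rc q (n + 1 + r)) =
      (qPochInf q q)⁻¹ * (q ^ (r * r - r) + q ^ (r * r + r + 1) + q ^ (r * r + 3 * r + 2)) := by
  have hE := vand_inf' h0 h1 r 1
  have hH := vand_inf' h0 h1 r 0
  have hE' := (Equiv.addRight (-1 : ℤ)).hasSum_iff.mpr hE
  have hT := (hE'.add ((hH.add (hE.mul_left (q ^ (r + 1)))).mul_left (q ^ (-r) + q ^ (r + 1)))).add
    (hE.mul_left (-(q + 1)))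
  have hfun : ∀ n : ℤ, (q ^ (n * (n - 1)) - q ^ (n * (n + 1))) * (rc q (n - r) * rc q (n + 1 + r)) =
      q ^ ((n + -1) * ((n + -1) + 1)) * (rc q ((n + -1) - r) * rc q ((n + -1) + 1 + r)) +
      (q ^ (-r) + q ^ (r + 1)) * (q ^ (n * (n + 0)) * (rc q (n - r) * rc q (n + 0 + r)) +
        q ^ (r + 1) * (q ^ (n * (n + 1)) * (rc q (n - r) * rc q (n + 1 + r)))) +
      -(q + 1) * (q ^ (n * (n + 1)) * (rc q (n - r) * rc q (n + 1 + r))) := by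
    intro n
    have e1 : rc q ((n + -1) - r) = (1 - q ^ (n - r)) * rc q (n - r) := by
      rw [← rc_rec h1]; congr 1; ring
    have e2 : rc q (n + 0 + r) = (1 - q ^ (n + 1 + r)) * rc q (n + 1 + r) := by
      rw [← rc_rec h1]; congr 1; ring
    have e3 : n + -1 + 1 + r = n + 0 + r := by ring
    have e4 : (n + -1) * ((n + -1) + 1) = n * (n - 1) := by ring
    have e5 : q ^ (n * (n + 0)) = q ^ (n * (n - 1)) * q ^ n := by
      rw [← zpow_add₀ h0]; congr 1; ring
    have e6 : q ^ (n * (n + 1)) = q ^ (n * (n - 1)) * q ^ n * q ^ n := by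
      rw [← zpow_add₀ h0, ← zpow_add₀ h0]; congr 1; ring
    rw [e3, e1, e2, e4, e5, e6]
    have e7 : q ^ (n - r) = q ^ n / q ^ r := zpow_sub₀ h0 _ _
    have e8 : q ^ (n + 1 + r) = q ^ n * q * q ^ r := by
      rw [zpow_add₀ h0, zpow_add_one₀ h0]
    have e9 : q ^ (r + 1) = q ^ r * q := zpow_add_one₀ h0 _
    have e10 : q ^ (-r) = (q ^ r)⁻¹ := zpow_neg _ _
    have hne : q ^ r ≠ 0 := zpow_ne_zero _ h0
    rw [e7, e8, e9, e10]
    generalize q ^ n = x at *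
    generalize q ^ r = y at *
    field_simp
    ring
  have := (hT.congr_fun hfun).tsum_eq
  rw [this]
  have f1 : q ^ (r * (r + 1)) = q ^ (r * r) * q ^ r := by
    rw [← zpow_add₀ h0]; congr 1; ring
  have f2 : q ^ (r * r - r) = q ^ (r * r) / q ^ r := zpow_sub₀ h0 _ _
  have f3 : q ^ (r * r + r + 1) = q ^ (r * r) * q ^ r * q := by
    rw [zpow_add_one₀ h0, zpow_add₀ h0]
  have f4 : q ^ (r * r + 3 * r + 2) = q ^ (r * r) * q ^ r * q ^ r * q ^ r * q * q := by
    rw [← zpow_add₀ h0, ← zpow_add₀ h0, ← zpow_add₀ h0, ← zpow_add_one₀ h0, ← zpow_add_one₀ h0]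
    congr 1; ring
  have e9 : q ^ (r + 1) = q ^ r * q := zpow_add_one₀ h0 _
  have e10 : q ^ (-r) = (q ^ r)⁻¹ := zpow_neg _ _
  have hne : q ^ r ≠ 0 := zpow_ne_zero _ h0
  rw [add_zero, f1, f2, f3, f4, e9, e10]
  field_simp
  ring

lemma fubini {f g : ℤ → ℂ} {c : ℤ → ℤ → ℂ} {C : ℝ} (hf : Summable fun s => ‖f s‖)
    (hg : Summable fun r => ‖g r‖) (hc : ∀ s r, ‖c s r‖ ≤ C) :
    ∑' s, f s * ∑' r, g r * c s r = ∑' r, g r * ∑' s, f s * c s r := by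
  have hs : Summable (Function.uncurry fun s r => f s * (g r * c s r)) := by
    have h := hf.mul_of_nonneg hg (fun _ => norm_nonneg _) (fun _ => norm_nonneg _)
    refine Summable.of_norm_bounded (h.mul_right C) fun x => ?_
    simp only [Function.uncurry, norm_mul]
    rw [← mul_assoc]
    exact mul_le_mul_of_nonneg_left (hc _ _) (by positivity)
  simp_rw [← tsum_mul_left]
  rw [← Summable.tsum_comm hs]
  refine tsum_congr fun r => tsum_congr fun s => ?_
  ring

noncomputable def al (q : ℂ) (j : ℕ) (r : ℤ) : ℂ := jx 1 q r * q ^ ((j : ℤ) * (r * (r + 1)))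

noncomputable def bB (q : ℂ) (j : ℕ) (n : ℤ) : ℂ :=
  ∑' r : ℤ, al q j r * (rc q (n - r) * rc q (n + 1 + r))

lemma norm_zpow_le {q : ℂ} (h0 : q ≠ 0) (h1 : ‖q‖ < 1) {e : ℤ} (he : 0 ≤ e) : ‖q ^ e‖ ≤ 1 := by
  rw [norm_zpow]
  have := zpow_le_zpow_right_of_le_one₀ (norm_pos_iff.mpr h0) h1.le he
  simpa using this

lemma rr_nonneg (r : ℤ) : 0 ≤ r * (r + 1) := by
  rcases lt_or_ge r 0 with h | h
  · exact mul_nonneg_of_nonpos_of_nonpos h.le (by omega)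
  · exact mul_nonneg h (by omega)

lemma summ_mul_bdd_norm {ι : Type*} {f g : ι → ℂ} {C : ℝ} (hf : Summable fun i => ‖f i‖)
    (hg : ∀ i, ‖g i‖ ≤ C) : Summable fun i => ‖f i * g i‖ := by
  refine Summable.of_nonneg_of_le (fun _ => norm_nonneg _) (fun i => ?_) (hf.mul_right C)
  rw [norm_mul]
  exact mul_le_mul_of_nonneg_left (hg i) (norm_nonneg _)

lemma summ_jx1 {q : ℂ} (h0 : q ≠ 0) (h1 : ‖q‖ < 1) : Summable fun r : ℤ => ‖jx 1 q r‖ := by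
  have h := summ_quad h0 h1 tri 3 fun r => by
    have := two_tri r
    have h3 : r * r = |r| * |r| := (abs_mul_abs_self r).symm
    have h4 := le_abs_self r
    have : 2 * |r| ≤ 2 * tri r + 6 := by nlinarith [sq_nonneg (2 * |r| - 3)]
    omega
  refine h.congr fun r => ?_
  simp [jx, norm_mul, norm_zpow]

lemma summ_al {q : ℂ} (h0 : q ≠ 0) (h1 : ‖q‖ < 1) (j : ℕ) : Summable fun r : ℤ => ‖al q j r‖ :=
  summ_mul_bdd_norm (summ_jx1 h0 h1) fun r =>
    norm_zpow_le h0 h1 (mul_nonneg (by positivity) (rr_nonneg r))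

lemma bB_neg (q : ℂ) (j : ℕ) {n : ℤ} (hn : n < 0) : bB q j n = 0 := by
  unfold bB
  convert tsum_zero with r
  rcases lt_or_ge n r with h' | h'
  · rw [rc_neg q (by omega : n - r < 0)]; simp
  · rw [rc_neg q (by omega : n + 1 + r < 0)]; simp

lemma bB_zero {q : ℂ} (h0 : q ≠ 0) (h1 : ‖q‖ < 1) (n : ℕ) :
    bB q 0 n = if n = 0 then 1 else 0 := by
  have h := jL_eval one_ne_zero h0 h1 (one_mul q) (summ_jx1 h0 h1) n
  have e : bB q 0 n = ∑' r : ℤ, jx 1 q r * (rc q (n - r) * rc q (n + 1 + r)) := by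
    simp [bB, al]
  rw [← e] at h
  apply mul_left_cancel₀ (qPoch_ne h1 (2 * n + 1))
  rw [h]
  rcases n with _ | n
  · simp [qPoch]
  · have : qPoch 1 q (n + 1) = 0 := by
      simp [qPoch, Finset.prod_range_succ']
    simp [this]

lemma bB_succ {q : ℂ} (h0 : q ≠ 0) (h1 : ‖q‖ < 1) (j : ℕ) (n : ℤ) :
    ∑' s : ℤ, q ^ (s * (s + 1)) * rc q (n - s) * bB q j s = bB q (j + 1) n := by
  obtain ⟨C, hC0, hC⟩ := rc_bdd h1
  have hs := summ_lin h0 h1 1 0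
  simp only [add_zero] at hs
  unfold bB
  rw [fubini (C := C * C) (summ_mul_bdd_norm hs fun s => hC (n - s)) (summ_al h0 h1 j) fun s r => by
    rw [norm_mul]; exact mul_le_mul (hC _) (hC _) (norm_nonneg _) hC0]
  refine tsum_congr fun r => ?_
  have e : ∑' s : ℤ, q ^ (s * (s + 1)) * rc q (n - s) * (rc q (s - r) * rc q (s + 1 + r)) =
      q ^ (r * (r + 1)) * (rc q (n - r) * rc q (n + 1 + r)) := by
    rw [← vand' h0 h1 n r 1]
    exact tsum_congr fun s => mul_assoc _ _ _
  rw [e]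
  unfold al
  push_cast
  rw [add_mul, zpow_add₀ h0, one_mul]
  ring

lemma tsum_int_nat {f : ℤ → ℂ} (hf : ∀ n < 0, f n = 0) : ∑' n : ℕ, f n = ∑' n : ℤ, f n := by
  refine Nat.cast_injective.tsum_eq (f := f) fun n hn => ?_
  rcases lt_or_ge n 0 with h | h
  · exact absurd (hf n h) hn
  · exact ⟨n.toNat, by simp [h]⟩

lemma bB_succ_nat {q : ℂ} (h0 : q ≠ 0) (h1 : ‖q‖ < 1) (j : ℕ) (n : ℤ) :
    ∑' s : ℕ, q ^ ((s : ℤ) * (s + 1)) * rc q (n - s) * bB q j s = bB q (j + 1) n := by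
  rw [← bB_succ h0 h1 j n]
  exact tsum_int_nat (f := fun s => q ^ (s * (s + 1)) * rc q (n - s) * bB q j s)
    fun n hn => by simp [bB_neg q j hn]

lemma bB_one {q : ℂ} (h0 : q ≠ 0) (h1 : ‖q‖ < 1) (n : ℤ) : bB q 1 n = rc q n := by
  rw [← bB_succ_nat h0 h1 0 n, tsum_eq_single 0]
  · simp [show bB q 0 0 = 1 by simpa using bB_zero h0 h1 0]
  · intro s hs
    simp [bB_zero h0 h1 s, hs]

lemma tri_refl (r : ℤ) : tri (-1 - r) = tri r + 2 * r + 1 := by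
  have h1 := two_tri r
  have h2 := two_tri (-1 - r)
  have : (-1 - r) * (-1 - r - 1) = r * (r - 1) + 4 * r + 2 := by ring
  omega

lemma total {q : ℂ} (h0 : q ≠ 0) (h1 : ‖q‖ < 1) (k : ℕ) :
    qPochInf q q * ∑' n : ℤ, (q ^ (n * (n - 1)) - q ^ (n * (n + 1))) * bB q k n =
      ∑' r : ℤ, jx (q ^ (2 * k)) (q ^ (2 * k + 3)) r := by
  obtain ⟨C, hC0, hC⟩ := rc_bdd h1
  have hs := summ_lin h0 h1 1 0
  have hs' := summ_lin h0 h1 (-1) 0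
  simp only [add_zero, ← sub_eq_add_neg] at hs hs'
  have hf : Summable fun n : ℤ => ‖q ^ (n * (n - 1)) - q ^ (n * (n + 1))‖ :=
    Summable.of_nonneg_of_le (fun _ => norm_nonneg _) (fun _ => norm_sub_le _ _) (hs'.add hs)
  have ha := summ_al h0 h1 k
  unfold bB
  rw [fubini (C := C * C) hf ha fun s r => by
    rw [norm_mul]; exact mul_le_mul (hC _) (hC _) (norm_nonneg _) hC0]
  simp_rw [inner_tsum h0 h1]
  rw [← tsum_mul_left]
  have s1 : Summable fun r : ℤ => al q k r * q ^ (r * r - r) :=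
    summ_mul_bdd ha fun r => norm_zpow_le h0 h1 (by have := rr_nonneg (r - 1); linarith)
  have s2 : Summable fun r : ℤ => al q k r * q ^ (r * r + r + 1) :=
    summ_mul_bdd ha fun r => norm_zpow_le h0 h1 (by have := rr_nonneg r; linarith)
  have s3 : Summable fun r : ℤ => al q k r * q ^ (r * r + 3 * r + 2) :=
    summ_mul_bdd ha fun r => norm_zpow_le h0 h1 (by have := rr_nonneg (r + 1); linarith)
  have hcancel : ∑' r : ℤ, al q k r * q ^ (r * r + 3 * r + 2) =
      - ∑' r : ℤ, al q k r * q ^ (r * r + r + 1) := by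
    rw [← (Equiv.subLeft (-1 : ℤ)).tsum_eq (fun r : ℤ => al q k r * q ^ (r * r + r + 1)), ← tsum_neg]
    refine tsum_congr fun r => ?_
    simp only [Equiv.subLeft_apply, al, jx]
    have e1 : (-1 : ℂ) ^ (-1 - r) = -(-1) ^ r := by
      rw [zpow_sub₀ (by norm_num)]
      rcases Int.even_or_odd r with h | h
      · simp [h.neg_one_zpow]
      · simp [h.neg_one_zpow]
    rw [e1, tri_refl, mul_assoc, mul_assoc, mul_assoc, mul_assoc, neg_mul, neg_neg]
    congr 1
    rw [← zpow_add₀ h0, ← zpow_add₀ h0, ← zpow_add₀ h0, ← zpow_add₀ h0]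
    congr 1
    ring
  calc _ = ∑' r : ℤ, (al q k r * q ^ (r * r - r) + al q k r * q ^ (r * r + r + 1) +
      al q k r * q ^ (r * r + 3 * r + 2)) := tsum_congr fun r => by
        have := qPochInf_ne h1
        field_simp
    _ = ∑' r : ℤ, al q k r * q ^ (r * r - r) := by
        rw [Summable.tsum_add (s1.add s2) s3, Summable.tsum_add s1 s2, hcancel]; ring
    _ = _ := tsum_congr fun r => by
        simp only [al, jx]
        rw [neg_eq_neg_one_mul (q ^ (2 * k)), mul_zpow, mul_assoc, mul_assoc, mul_assoc]
        congr 1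
        rw [← zpow_natCast, ← zpow_natCast, ← zpow_mul, ← zpow_mul, ← zpow_add₀ h0, ← zpow_add₀ h0,
          ← zpow_add₀ h0]
        congr 1
        push_cast
        have := two_tri r
        linear_combination (-k - 1 : ℤ) * this

lemma rhs_eq {q : ℂ} (h0 : q ≠ 0) (h1 : ‖q‖ < 1) (k : ℕ) :
    ∑' r : ℤ, jx (q ^ (2 * k)) (q ^ (2 * k + 3)) r =
     qPochInf (q ^ 3) (q ^ (2 * k + 3)) * qPochInf (q ^ (2 * k)) (q ^ (2 * k + 3)) *
        qPochInf (q ^ (2 * k + 3)) (q ^ (2 * k + 3)) := by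
  rw [jtp (b := q ^ 3) (pow_ne_zero _ h0) (pow_ne_zero _ h0) _ (by ring)]
  · ring
  · refine (summ_mul_bdd_norm (summ_al h0 h1 k) (g := fun r => q ^ (r * r - r)) fun r =>
      norm_zpow_le h0 h1 (by have := rr_nonneg (r - 1); linarith)).congr fun r => ?_
    congr 1
    simp only [al, jx]
    rw [neg_eq_neg_one_mul (q ^ (2 * k)), mul_zpow, mul_assoc, mul_assoc, mul_assoc]
    congr 1
    rw [← zpow_natCast, ← zpow_natCast, ← zpow_mul, ← zpow_mul, ← zpow_add₀ h0, ← zpow_add₀ h0,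
      ← zpow_add₀ h0]
    congr 1
    push_cast
    have := two_tri r
    linear_combination (-k - 1 : ℤ) * this
  · rw [norm_pow]
    exact pow_lt_one₀ (norm_nonneg _) h1 (by omega)

/-- extension by zero -/
def ext0 (k : ℕ) (s : Fin k → ℕ) : ℕ → ℕ := fun m => if h : m < k then s ⟨m, h⟩ else 0

noncomputable def gH (q : ℂ) (k : ℕ) (n : ℤ) (t : ℕ → ℕ) : ℂ :=
  rc q (n - t 0) * ∏ m ∈ Finset.range k, (q ^ ((t m : ℤ) * (t m + 1)) * rc q ((t m : ℤ) - t (m + 1)))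

lemma gH_succ (q : ℂ) (k : ℕ) (n : ℤ) (t : ℕ → ℕ) :
    gH q (k + 1) n t = q ^ ((t 0 : ℤ) * (t 0 + 1)) * rc q (n - t 0) *
      gH q k (t 0) (fun m => t (m + 1)) := by
  unfold gH
  rw [Finset.prod_range_succ']
  simp only [zero_add]
  ring

lemma ext0_cons (k : ℕ) (a : ℕ) (s : Fin k → ℕ) :
    ext0 (k + 1) (Fin.cons a s) 0 = a ∧ (fun m => ext0 (k + 1) (Fin.cons a s) (m + 1)) = ext0 k s := by
  constructor
  · simp [ext0]
  · funext m
    simp only [ext0, Nat.add_lt_add_iff_right]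
    split_ifs with h
    · exact Fin.cons_succ (α := fun _ => ℕ) a s ⟨m, h⟩
    · rfl

lemma sum_cons {k : ℕ} (f : (Fin (k + 1) → ℕ) → ℂ)
    (hf : Summable fun p : ℕ × (Fin k → ℕ) => f (Fin.cons p.1 p.2)) :
    Summable f ∧ ∑' s, f s = ∑' a : ℕ, ∑' s : Fin k → ℕ, f (Fin.cons a s) := by
  let e : ℕ × (Fin k → ℕ) ≃ (Fin (k + 1) → ℕ) := Fin.consEquiv (fun _ => ℕ)
  have he : ∀ p, e p = Fin.cons p.1 p.2 := fun p => rfl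
  refine ⟨e.summable_iff.mp hf, ?_⟩
  rw [← e.tsum_eq]
  exact Summable.tsum_prod hf

lemma gH_sum {q : ℂ} (h0 : q ≠ 0) (h1 : ‖q‖ < 1) (k : ℕ) :
    (∃ F : (Fin k → ℕ) → ℝ, Summable F ∧ (∀ s, 0 ≤ F s) ∧ ∀ n s, ‖gH q k n (ext0 k s)‖ ≤ F s) ∧
    ∀ n : ℤ, ∑' s : Fin k → ℕ, gH q k n (ext0 k s) = bB q (k + 1) n := by
  obtain ⟨C, hC0, hC⟩ := rc_bdd h1
  induction k with
  | zero =>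
    refine ⟨⟨fun _ => C, Summable.of_finite, fun _ => hC0, fun n s => ?_⟩, fun n => ?_⟩
    · simpa [gH] using hC _
    · rw [bB_one h0 h1]
      simp [gH, ext0]
  | succ k ih =>
    obtain ⟨⟨F, hF, hF0, hFb⟩, ihs⟩ := ih
    have hgeo : Summable fun a : ℕ => ‖q ^ ((a : ℤ) * (a + 1))‖ := by
      have hs := summ_lin h0 h1 1 0
      simp only [add_zero] at hs
      exact hs.comp_injective Nat.cast_injective
    have hprod : Summable fun p : ℕ × (Fin k → ℕ) =>
        (‖q ^ ((p.1 : ℤ) * (p.1 + 1))‖ * C) * F p.2 :=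
      (hgeo.mul_right C).mul_of_nonneg hF (fun _ => by positivity) hF0
    have hcons : ∀ n : ℤ, ∀ a : ℕ, ∀ s : Fin k → ℕ, gH q (k + 1) n (ext0 (k + 1) (Fin.cons a s)) =
        q ^ ((a : ℤ) * (a + 1)) * rc q (n - a) * gH q k a (ext0 k s) := by
      intro n a s
      obtain ⟨e1, e2⟩ := ext0_cons k a s
      rw [gH_succ, e1, e2]
    have hbd : ∀ n : ℤ, ∀ a : ℕ, ∀ s : Fin k → ℕ, ‖gH q (k + 1) n (ext0 (k + 1) (Fin.cons a s))‖ ≤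
        (‖q ^ ((a : ℤ) * (a + 1))‖ * C) * F s := by
      intro n a s
      rw [hcons, norm_mul, norm_mul]
      exact mul_le_mul (mul_le_mul_of_nonneg_left (hC _) (norm_nonneg _)) (hFb _ _) (norm_nonneg _)
        (by positivity)
    refine ⟨?_, fun n => ?_⟩
    · let e : ℕ × (Fin k → ℕ) ≃ (Fin (k + 1) → ℕ) := Fin.consEquiv (fun _ => ℕ)
      refine ⟨_, e.symm.summable_iff.mpr hprod, fun s => ?_, fun n s => ?_⟩
      · exact mul_nonneg (by positivity) (hF0 _)
      · obtain ⟨p, rfl⟩ := e.surjective s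
        simp only [Function.comp, Equiv.symm_apply_apply]
        exact hbd n p.1 p.2
    · rw [(sum_cons _ (Summable.of_norm_bounded hprod fun p => hbd n p.1 p.2)).2]
      simp_rw [hcons, tsum_mul_left, ihs]
      exact bB_succ_nat h0 h1 (k + 1) n

lemma multi {q : ℂ} (h0 : q ≠ 0) (h1 : ‖q‖ < 1) (k : ℕ) :
    ∑' s : Fin (k + 1) → ℕ, (q ^ ((s 0 : ℤ) * (s 0 - 1)) - q ^ ((s 0 : ℤ) * (s 0 + 1))) *
      gH q k (s 0) (fun m => ext0 (k + 1) s (m + 1)) =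
    ∑' n : ℤ, (q ^ (n * (n - 1)) - q ^ (n * (n + 1))) * bB q (k + 1) n := by
  obtain ⟨⟨F, hF, hF0, hFb⟩, hsum⟩ := gH_sum h0 h1 k
  have hs := summ_lin h0 h1 1 0
  have hs' := summ_lin h0 h1 (-1) 0
  simp only [add_zero, ← sub_eq_add_neg] at hs hs'
  have hf : Summable fun n : ℤ => ‖q ^ (n * (n - 1)) - q ^ (n * (n + 1))‖ :=
    Summable.of_nonneg_of_le (fun _ => norm_nonneg _) (fun _ => norm_sub_le _ _) (hs'.add hs)
  have hf' : Summable fun n : ℕ => ‖q ^ ((n : ℤ) * (n - 1)) - q ^ ((n : ℤ) * (n + 1))‖ :=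
    hf.comp_injective Nat.cast_injective
  have hprod := hf'.mul_of_nonneg hF (fun _ => norm_nonneg _) hF0
  rw [(sum_cons _ (Summable.of_norm_bounded hprod fun p => ?_)).2]
  · rw [← tsum_int_nat (f := fun n => (q ^ (n * (n - 1)) - q ^ (n * (n + 1))) * bB q (k + 1) n)
      fun n hn => by simp [bB_neg q _ hn]]
    refine tsum_congr fun a => ?_
    rw [← hsum, ← tsum_mul_left]
    refine tsum_congr fun s => ?_
    rw [(ext0_cons k a s).2, Fin.cons_zero]
  · rw [(ext0_cons k p.1 p.2).2, Fin.cons_zero, norm_mul]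
    exact mul_le_mul_of_nonneg_left (hFb _ _) (norm_nonneg _)

lemma term_eq {q : ℂ} (h0 : q ≠ 0) (k : ℕ) (t : ℕ → ℕ) (ht : Antitone t) :
    q ^ ((∑ m ∈ Finset.range (k + 1), (t m : ℤ) ^ 2) - (t 0 : ℤ) +
              ∑ m ∈ Finset.Ico 1 (k + 1), (t m : ℤ)) *
           (1 - q ^ (2 * t 0)) /
           ∏ m ∈ Finset.range (k + 1), qPoch q q (t m - t (m + 1)) =
    (q ^ ((t 0 : ℤ) * (t 0 - 1)) - q ^ ((t 0 : ℤ) * (t 0 + 1))) *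
      gH q k (t 0) (fun m => t (m + 1)) := by
  have hrc : ∀ m, rc q ((t m : ℤ) - t (m + 1)) = (qPoch q q (t m - t (m + 1)))⁻¹ := by
    intro m
    rw [← rc_nat, Nat.cast_sub (ht (Nat.le_succ m))]
  unfold gH
  simp only [zero_add, hrc]
  rw [Finset.prod_mul_distrib, Finset.prod_range_succ' (fun m => qPoch q q (t m - t (m + 1))),
    Finset.prod_inv_distrib, Finset.sum_range_succ', Finset.sum_Ico_eq_sum_range]
  have e1 : ∏ x ∈ Finset.range k, q ^ ((t (x + 1) : ℤ) * (t (x + 1) + 1)) =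
      q ^ (∑ x ∈ Finset.range k, (t (x + 1) : ℤ) ^ 2 + ∑ x ∈ Finset.range k, (t (x + 1) : ℤ)) := by
    rw [← Finset.sum_add_distrib]
    induction k with
    | zero => simp
    | succ k ih =>
      rw [Finset.prod_range_succ, Finset.sum_range_succ, zpow_add₀ h0, ih]
      congr 2
      ring
  have e2 : ∑ i ∈ Finset.range (k + 1 - 1), ((t (1 + i) : ℕ) : ℤ) =
      ∑ x ∈ Finset.range k, (t (x + 1) : ℤ) := by
    simp [add_comm]
  rw [e1, e2]
  generalize ∑ x ∈ Finset.range k, (t (x + 1) : ℤ) ^ 2 = X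
  generalize ∑ x ∈ Finset.range k, (t (x + 1) : ℤ) = Y
  have e3 : q ^ (X + (t 0 : ℤ) ^ 2 - (t 0 : ℤ) + Y) = q ^ (X + Y) * q ^ ((t 0 : ℤ) * (t 0 - 1)) := by
    rw [← zpow_add₀ h0]; congr 1; ring
  have e4 : q ^ ((t 0 : ℤ) * (t 0 + 1)) = q ^ ((t 0 : ℤ) * (t 0 - 1)) * q ^ (2 * t 0) := by
    rw [← zpow_natCast, ← zpow_add₀ h0]; congr 1; push_cast; ring
  rw [e3, e4, div_eq_mul_inv, mul_inv]
  ring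

lemma gH_zero (q : ℂ) (k : ℕ) (t : ℕ → ℕ) (h : ∃ m ≤ k, t m < t (m + 1)) :
    gH q k (t 0) (fun m => t (m + 1)) = 0 := by
  obtain ⟨m, hm, hlt⟩ := h
  unfold gH
  rcases m with _ | m
  · rw [rc_neg q (by simpa using hlt)]; simp
  · rw [Finset.prod_eq_zero (i := m) (Finset.mem_range.mpr (by omega)), mul_zero]
    rw [rc_neg q (by omega : ((t (m + 1) : ℤ) - t (m + 1 + 1)) < 0), mul_zero]

/-- Stembridge's identity (I14).  The tuple `s` encodes `s_1 ≥ s_2 ≥ ⋯ ≥ s_k ≥ 0` via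
`s_m = t (m-1)`, with the convention `s_{k+1} = 0`; the exponent of `q` is the integer
`s_1² + ⋯ + s_k² - s_1 + s_2 + ⋯ + s_k`. -/
theorem stembridge_I14 (q : ℂ) (h0 : 0 < ‖q‖) (h1 : ‖q‖ < 1)
    (k : ℕ) (hk : 1 ≤ k) :
    qPochInf q q *
      (∑' s : {s : Fin k → ℕ // Antitone s},
        (let t : ℕ → ℕ := fun m => if h : m < k then s.1 ⟨m, h⟩ else 0
         q ^ ((∑ m ∈ Finset.range k, (t m : ℤ) ^ 2) - (t 0 : ℤ) +
              ∑ m ∈ Finset.Ico 1 k, (t m : ℤ)) *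
           (1 - q ^ (2 * t 0)) /
           ∏ m ∈ Finset.range k, qPoch q q (t m - t (m + 1)))) =
      qPochInf (q ^ 3) (q ^ (2 * k + 3)) * qPochInf (q ^ (2 * k)) (q ^ (2 * k + 3)) *
        qPochInf (q ^ (2 * k + 3)) (q ^ (2 * k + 3)) := by
  have hq : q ≠ 0 := norm_pos_iff.mp h0
  obtain ⟨k, rfl⟩ : ∃ j, k = j + 1 := ⟨k - 1, by omega⟩
  rw [← rhs_eq hq h1, ← total hq h1, ← multi hq h1]
  congr 1
  have hanti : ∀ s : Fin (k + 1) → ℕ, Antitone s → Antitone (ext0 (k + 1) s) := by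
    intro s hs m n hmn
    simp only [ext0]
    split_ifs with h2 h3
    · exact hs (by simpa using hmn)
    · omega
    · exact Nat.zero_le _
    · exact le_rfl
  have h00 : ∀ s : Fin (k + 1) → ℕ, ext0 (k + 1) s 0 = s 0 := fun s => by simp [ext0]
  have hsupp : Function.support (fun s : Fin (k + 1) → ℕ =>
      (q ^ ((s 0 : ℤ) * (s 0 - 1)) - q ^ ((s 0 : ℤ) * (s 0 + 1))) *
      gH q k (s 0) (fun m => ext0 (k + 1) s (m + 1))) ⊆ {s | Antitone s} := by
    intro s hs
    by_contra hna
    apply hs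
    have : ∃ m ≤ k, ext0 (k + 1) s m < ext0 (k + 1) s (m + 1) := by
      by_contra! hcon
      apply hna
      refine Fin.antitone_iff_succ_le.mpr fun i => ?_
      have := hcon i i.2.le
      simpa [ext0, Fin.castSucc, Fin.castAdd, Fin.castLE, Fin.succ, i.2, Nat.lt_succ_of_lt i.2] using this
    have := gH_zero q k _ this
    rw [h00] at this
    simp only [this, mul_zero]
  rw [← tsum_subtype_eq_of_support_subset hsupp]
  refine tsum_congr fun s => ?_
  refine (term_eq hq k (ext0 (k + 1) s.1) (hanti s.1 s.2)).trans ?_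
  rw [h00]
end

section
/- (Identity (7.1).) Let q be a complex number with 0 < |q| < 1. Then ∑_{s_1 ≥ s_2 ≥ 0} q^{3 s_1^2 + s_2^2 + s_2} (q;q)_{3 s_1 - s_2} / [(q^3;q^3)_{2 s_1} (q^3;q^3)_{s_1 - s_2} (q^2;q^2)_{s_2}] = (q^{10}, q^4, q^6; q^{10})_∞ / (q^3;q^3)_∞. -/
namespace Id71

open Finset

/-- Reciprocal of `(q;q)_m`, extended by zero to negative `m`. -/
noncomputable def iP (q : ℂ) (m : ℤ) : ℂ := if m < 0 then 0 else (qPoch q q m.toNat)⁻¹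

lemma iP_neg (q : ℂ) {m : ℤ} (h : m < 0) : iP q m = 0 := by simp [iP, h]

lemma iP_nat (q : ℂ) (m : ℕ) : iP q m = (qPoch q q m)⁻¹ := by simp [iP]

lemma iP_zero (q : ℂ) : iP q 0 = 1 := by simp [iP, qPoch]

lemma qPoch_succ (x q : ℂ) (n : ℕ) : qPoch x q (n + 1) = qPoch x q n * (1 - x * q ^ n) := by
  simp [qPoch, prod_range_succ]

/-- `q` is nonzero and not a root of unity. -/
def Good (q : ℂ) : Prop := q ≠ 0 ∧ ∀ n : ℕ, q ^ (n + 1) ≠ 1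

lemma good_of_norm {q : ℂ} (h0 : 0 < ‖q‖) (h1 : ‖q‖ < 1) : Good q := by
  refine ⟨norm_pos_iff.mp h0, fun n h => ?_⟩
  have := congrArg norm h
  rw [norm_pow, norm_one] at this
  exact absurd this (pow_lt_one₀ (norm_nonneg _) h1 (by omega)).ne

lemma Good.zpow_ne {q : ℂ} (h : Good q) {m : ℤ} (hm : 0 < m) : 1 - q ^ m ≠ 0 := by
  obtain ⟨n, rfl⟩ : ∃ n : ℕ, m = (n + 1 : ℕ) := ⟨(m - 1).toNat, by omega⟩
  rw [zpow_natCast]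
  exact sub_ne_zero.mpr (h.2 n).symm

lemma Good.pow {q : ℂ} (h : Good q) (k : ℕ) : Good (q ^ (k + 1)) := by
  refine ⟨pow_ne_zero _ h.1, fun n => ?_⟩
  rw [← pow_mul]
  have := h.2 ((k + 1) * (n + 1) - 1)
  rwa [Nat.sub_add_cancel (by nlinarith)] at this

lemma qPoch_ne {q : ℂ} (h : Good q) (n : ℕ) : qPoch q q n ≠ 0 := by
  rw [qPoch, prod_ne_zero_iff]
  intro j _
  rw [← pow_succ']
  exact sub_ne_zero.mpr (h.2 j).symm

lemma iP_rec {q : ℂ} (h : Good q) (m : ℤ) : iP q (m - 1) = (1 - q ^ m) * iP q m := by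
  rcases lt_trichotomy m 0 with hm | rfl | hm
  · rw [iP_neg q hm, iP_neg q (by omega), mul_zero]
  · rw [iP_neg q (by omega)]; simp
  · obtain ⟨n, rfl⟩ : ∃ n : ℕ, m = (n + 1 : ℕ) := ⟨(m - 1).toNat, by omega⟩
    rw [show ((n + 1 : ℕ) : ℤ) - 1 = (n : ℕ) by push_cast; ring, iP_nat, iP_nat, qPoch_succ,
      zpow_natCast, ← pow_succ', mul_inv]
    have h1 := qPoch_ne h n
    have h2 : 1 - q ^ (n + 1) ≠ 0 := sub_ne_zero.mpr (h.2 n).symm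
    field_simp

/-! ### The Bailey lemma kernel -/

lemma bailey_term {q : ℂ} (h : Good q) (N n r : ℤ) :
    (1 - q ^ (N - r)) * (1 - q ^ (N + r)) *
        (q ^ (n ^ 2) * iP q (N - n) * iP q (n - r) * iP q (n + r)) -
      (q ^ (n ^ 2) * iP q (N - 1 - n) * iP q (n - r) * iP q (n + r)) =
    q ^ (N - n) * q ^ (n ^ 2) * iP q (N - n) * iP q (n - 1 - r) * iP q (n - 1 + r) -
      q ^ (N - (n + 1)) * q ^ ((n + 1) ^ 2) * iP q (N - (n + 1)) * iP q (n + 1 - 1 - r) *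
        iP q (n + 1 - 1 + r) := by
  have hq := h.1
  rw [show N - 1 - n = N - n - 1 by ring, show N - (n + 1) = N - n - 1 by ring,
    show n - 1 - r = n - r - 1 by ring, show n - 1 + r = n + r - 1 by ring,
    show n + 1 - 1 - r = n - r by ring, show n + 1 - 1 + r = n + r by ring,
    show (n + 1) ^ 2 = n ^ 2 + n + n + 1 by ring, iP_rec h, iP_rec h, iP_rec h]
  simp only [zpow_add₀ hq, zpow_sub₀ hq, zpow_one]
  have hN := zpow_ne_zero N hq
  have hn := zpow_ne_zero n hq
  have hr := zpow_ne_zero r hq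
  field_simp
  ring

lemma bailey_nat {q : ℂ} (h : Good q) (r m K : ℕ) (hK : r + m ≤ K) :
    ∑ n ∈ range (K + 1), q ^ ((n : ℤ) ^ 2) * iP q ((r + m : ℕ) - n) * iP q (n - r) * iP q (n + r)
      = q ^ ((r : ℤ) ^ 2) * iP q ((r + m : ℕ) - r) * iP q ((r + m : ℕ) + r) := by
  induction m with
  | zero =>
    rw [sum_eq_single r]
    · simp [iP_zero]
    · intro n _ hn
      rcases lt_or_gt_of_ne hn with hn | hn
      · rw [iP_neg q (m := (n : ℤ) - r) (by omega)]; ring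
      · rw [iP_neg q (m := ((r + 0 : ℕ) : ℤ) - n) (by omega)]; ring
    · intro hr; simp at hr; omega
  | succ m ih =>
    have ih := ih (by omega)
    have key := Finset.sum_congr rfl (fun (n : ℕ) (_ : n ∈ range (K + 1)) =>
      bailey_term h ((r + (m + 1) : ℕ) : ℤ) n r)
    rw [sum_sub_distrib, ← mul_sum] at key
    have tel := sum_range_sub' (fun n : ℕ => q ^ (((r + (m + 1) : ℕ) : ℤ) - n) * q ^ ((n : ℤ) ^ 2) *
      iP q (((r + (m + 1) : ℕ) : ℤ) - n) * iP q ((n : ℤ) - 1 - r) * iP q ((n : ℤ) - 1 + r)) (K + 1)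
    rw [iP_neg q (m := ((0 : ℕ) : ℤ) - 1 - r) (by push_cast; omega),
      iP_neg q (m := ((r + (m + 1) : ℕ) : ℤ) - (K + 1 : ℕ)) (by omega)] at tel
    push_cast at tel key ih ⊢
    rw [tel, show ((r : ℤ) + (m + 1) - 1) = r + m by ring, ih] at key
    have e1 := iP_rec h ((r : ℤ) + (m + 1) - r)
    have e2 := iP_rec h ((r : ℤ) + (m + 1) + r)
    rw [show (r : ℤ) + (m + 1) - r - 1 = r + m - r by ring] at e1
    rw [show (r : ℤ) + (m + 1) + r - 1 = r + m + r by ring] at e2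
    rw [e1, e2] at key
    have n1 : 1 - q ^ ((r : ℤ) + (m + 1) - r) ≠ 0 := h.zpow_ne (by omega)
    have n2 : 1 - q ^ ((r : ℤ) + (m + 1) + r) ≠ 0 := h.zpow_ne (by omega)
    apply mul_left_cancel₀ (mul_ne_zero n1 n2)
    linear_combination key

lemma bailey {q : ℂ} (h : Good q) (N : ℕ) (r : ℤ) (hr : r.natAbs ≤ N) :
    ∑ n ∈ range (N + 1), q ^ ((n : ℤ) ^ 2) * iP q (N - n) * iP q (n - r) * iP q (n + r)
      = q ^ (r ^ 2) * iP q (N - r) * iP q (N + r) := by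
  have := bailey_nat h r.natAbs (N - r.natAbs) N (by omega)
  rw [show r.natAbs + (N - r.natAbs) = N by omega] at this
  rcases Int.natAbs_eq r with e | e
  · rw [← e] at this; exact this
  · have e' : (r.natAbs : ℤ) = - r := by omega
    rw [e'] at this
    simp only [sub_neg_eq_add, ← sub_eq_add_neg, neg_sq] at this
    rw [mul_right_comm, ← this]
    exact sum_congr rfl fun _ _ => mul_right_comm _ _ _

/-! ### The cubic kernel -/

lemma cubic_term {q : ℂ} (h : Good q) (n k r : ℤ) (hn : 0 ≤ n) :
    q ^ (2 * r + 1) * (1 - (q ^ 3) ^ (n - r)) * (qPoch q q (3 * n - k).toNat * q ^ (k ^ 2) *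
        iP (q ^ 3) (n - k) * iP q (k - r) * iP q (k + r)) -
      (1 - (q ^ 3) ^ (n + r + 1)) * (qPoch q q (3 * n - k).toNat * q ^ (k ^ 2) *
        iP (q ^ 3) (n - k) * iP q (k - (r + 1)) * iP q (k + (r + 1))) =
    (1 - q ^ (2 * r + 1)) * (qPoch q q (3 * n - (k + 1) + 1).toNat * q ^ ((k + 1) ^ 2) *
        iP (q ^ 3) (n - (k + 1)) * iP q (k + 1 - r - 1) * iP q (k + 1 + r)) -
    (1 - q ^ (2 * r + 1)) * (qPoch q q (3 * n - k + 1).toNat * q ^ (k ^ 2) *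
        iP (q ^ 3) (n - k) * iP q (k - r - 1) * iP q (k + r)) := by
  have hq := h.1
  have h3 : Good (q ^ 3) := h.pow 2
  rcases lt_or_ge n k with hk | hk
  · rw [iP_neg _ (m := n - k) (by omega), iP_neg _ (m := n - (k + 1)) (by omega)]; ring
  have hp : qPoch q q (3 * n - k + 1).toNat =
      qPoch q q (3 * n - k).toNat * (1 - q ^ (3 * n - k + 1)) := by
    rw [show (3 * n - k + 1).toNat = (3 * n - k).toNat + 1 by omega, qPoch_succ, ← pow_succ',
      ← zpow_natCast q ((3 * n - k).toNat + 1)]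
    congr 3
    push_cast
    omega
  have e1 := iP_rec h (k + r + 1)
  rw [show k + r + 1 - 1 = k + r by ring] at e1
  rw [show 3 * n - (k + 1) + 1 = 3 * n - k by ring, hp, show n - (k + 1) = n - k - 1 by ring,
    show k + 1 - r - 1 = k - r by ring, show k + 1 + r = k + r + 1 by ring,
    show k + (r + 1) = k + r + 1 by ring, show k - (r + 1) = k - r - 1 by ring,
    show (k + 1) ^ 2 = k ^ 2 + k + k + 1 by ring, iP_rec h, iP_rec h3, e1]
  have c3 : ∀ m : ℤ, (q ^ 3) ^ m = (q ^ m) ^ 3 := fun m => by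
    rw [← zpow_natCast, ← zpow_natCast, zpow_comm]
  simp only [c3, zpow_add₀ hq, zpow_sub₀ hq, zpow_one,
    show q ^ (3 * n) = (q ^ n) ^ 3 by rw [mul_comm, zpow_mul]; norm_cast,
    show q ^ (2 * r) = (q ^ r) ^ 2 by rw [mul_comm, zpow_mul]; norm_cast]
  have hN := zpow_ne_zero n hq
  have hn := zpow_ne_zero k hq
  have hr := zpow_ne_zero r hq
  field_simp
  ring

lemma cubic_nat {q : ℂ} (h : Good q) (r m K : ℕ) (hK : r + m ≤ K) :
    ∑ k ∈ range (K + 1), qPoch q q (3 * ((r + m : ℕ) : ℤ) - k).toNat * q ^ ((k : ℤ) ^ 2) *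
        iP (q ^ 3) ((r + m : ℕ) - k) * iP q (k - r) * iP q (k + r)
      = qPoch (q ^ 3) (q ^ 3) (2 * (r + m)) *
        (q ^ ((r : ℤ) ^ 2) * iP (q ^ 3) ((r + m : ℕ) - r) * iP (q ^ 3) ((r + m : ℕ) + r)) := by
  have h3 : Good (q ^ 3) := h.pow 2
  induction m generalizing r with
  | zero =>
    rw [sum_eq_single r]
    · have a1 := qPoch_ne h (2 * r)
      have a2 := qPoch_ne h3 (2 * r)
      rw [show (3 * ((r + 0 : ℕ) : ℤ) - r).toNat = 2 * r by omega,
        show ((r + 0 : ℕ) : ℤ) - r = 0 by simp, show (r : ℤ) + r = (2 * r : ℕ) by push_cast; ring,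
        show ((r + 0 : ℕ) : ℤ) + r = (2 * r : ℕ) by push_cast; ring, sub_self, iP_nat, iP_nat,
        iP_zero, iP_zero, add_zero]
      field_simp
    · intro n _ hn
      rcases lt_or_gt_of_ne hn with hn | hn
      · rw [iP_neg q (m := (n : ℤ) - r) (by omega)]; ring
      · rw [iP_neg _ (m := ((r + 0 : ℕ) : ℤ) - n) (by omega)]; ring
    · intro hr; simp at hr; omega
  | succ m ih =>
    have ih := ih (r + 1) (by omega)
    rw [show r + 1 + m = r + (m + 1) by ring] at ih
    have key := Finset.sum_congr rfl (fun (k : ℕ) (_ : k ∈ range (K + 1)) =>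
      cubic_term h ((r + (m + 1) : ℕ) : ℤ) k r (by omega))
    rw [sum_sub_distrib, ← mul_sum, ← mul_sum] at key
    have tel := sum_range_sub (fun k : ℕ => (1 - q ^ (2 * (r : ℤ) + 1)) *
      (qPoch q q (3 * ((r + (m + 1) : ℕ) : ℤ) - k + 1).toNat * q ^ ((k : ℤ) ^ 2) *
        iP (q ^ 3) (((r + (m + 1) : ℕ) : ℤ) - k) * iP q ((k : ℤ) - r - 1) * iP q (k + r))) (K + 1)
    rw [iP_neg q (m := ((0 : ℕ) : ℤ) - r - 1) (by push_cast; omega),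
      iP_neg _ (m := ((r + (m + 1) : ℕ) : ℤ) - (K + 1 : ℕ)) (by omega)] at tel
    obtain ⟨n, hn⟩ : ∃ n, n = r + (m + 1) := ⟨_, rfl⟩
    rw [← hn] at ih key tel ⊢
    push_cast at tel key ih ⊢
    rw [tel, ih] at key
    have e1 := iP_rec h3 ((n : ℤ) - r)
    have e2 := iP_rec h3 ((n : ℤ) + r + 1)
    rw [show (n : ℤ) + r + 1 - 1 = n + r by ring] at e2
    rw [show (n : ℤ) - (r + 1) = n - r - 1 by ring, show (n : ℤ) + (r + 1) = n + r + 1 by ring,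
      e1, show ((r : ℤ) + 1) ^ 2 = r ^ 2 + (2 * r + 1) by ring, zpow_add₀ h.1 ((r : ℤ) ^ 2)] at key
    rw [e2]
    have n1 : 1 - (q ^ 3) ^ ((n : ℤ) - r) ≠ 0 := h3.zpow_ne (by omega)
    have n2 : q ^ (2 * (r : ℤ) + 1) ≠ 0 := zpow_ne_zero _ h.1
    apply mul_left_cancel₀ (mul_ne_zero n2 n1)
    linear_combination key

lemma cubic {q : ℂ} (h : Good q) (n K : ℕ) (hK : n ≤ K) (r : ℤ) :
    ∑ k ∈ range (K + 1), qPoch q q (3 * n - k) * q ^ ((k : ℤ) ^ 2) *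
        iP (q ^ 3) (n - k) * iP q (k - r) * iP q (k + r)
      = qPoch (q ^ 3) (q ^ 3) (2 * n) *
        (q ^ (r ^ 2) * iP (q ^ 3) (n - r) * iP (q ^ 3) (n + r)) := by
  have hpos : ∀ r : ℕ, ∑ k ∈ range (K + 1), qPoch q q (3 * n - k) * q ^ ((k : ℤ) ^ 2) *
        iP (q ^ 3) (n - k) * iP q (k - r) * iP q (k + r)
      = qPoch (q ^ 3) (q ^ 3) (2 * n) *
        (q ^ ((r : ℤ) ^ 2) * iP (q ^ 3) (n - r) * iP (q ^ 3) (n + r)) := by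
    intro r
    rcases lt_or_ge n r with hr | hr
    · rw [iP_neg (q ^ 3) (m := (n : ℤ) - r) (by omega), sum_eq_zero]
      · ring
      · intro k _
        rcases lt_or_ge n k with hk | hk
        · rw [iP_neg (q ^ 3) (m := (n : ℤ) - k) (by omega)]; ring
        · rw [iP_neg q (m := (k : ℤ) - r) (by omega)]; ring
    · have := cubic_nat h r (n - r) K (by omega)
      rw [show r + (n - r) = n by omega] at this
      rw [← this]
      refine sum_congr rfl fun k _ => ?_
      rw [show (3 * (n : ℤ) - k).toNat = 3 * n - k by omega]
  have := hpos r.natAbs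
  rcases Int.natAbs_eq r with e | e
  · rw [← e] at this; exact this
  · have e' : (r.natAbs : ℤ) = - r := by omega
    rw [e'] at this
    simp only [sub_neg_eq_add, ← sub_eq_add_neg, neg_sq] at this
    rw [mul_right_comm (q ^ (r ^ 2)), ← this]
    exact sum_congr rfl fun _ _ => mul_right_comm _ _ _

/-! ### Sums over symmetric integer intervals -/

lemma sum_sym_succ (f : ℤ → ℂ) (M : ℕ) :
    ∑ r ∈ Icc (-((M + 1 : ℕ) : ℤ)) (M + 1 : ℕ), f r =
      ∑ r ∈ Icc (-(M : ℤ)) M, f r + f (M + 1) + f (-(M + 1)) := by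
  have : Icc (-((M + 1 : ℕ) : ℤ)) (M + 1 : ℕ) =
      insert (-(M + 1) : ℤ) (insert ((M : ℤ) + 1) (Icc (-(M : ℤ)) M)) := by
    ext x; simp only [mem_Icc, mem_insert]; push_cast; omega
  rw [this, sum_insert, sum_insert]
  · ring
  · simp
  · simp only [mem_Icc, mem_insert]; omega

lemma sum_sym_tel (G : ℤ → ℂ) (M : ℕ) :
    ∑ r ∈ Icc (-(M : ℤ)) M, (G (r + 1) - G r) = G (M + 1) - G (-M) := by
  induction M with
  | zero => simp
  | succ M ih =>
    rw [sum_sym_succ, ih, show -((M : ℤ) + 1) + 1 = -M by ring]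
    push_cast
    rw [show -((M : ℤ) + 1) = -1 + -M by ring]
    ring

lemma sum_sym_neg (f : ℤ → ℂ) (M : ℕ) :
    ∑ r ∈ Icc (-(M : ℤ)) M, f (-r) = ∑ r ∈ Icc (-(M : ℤ)) M, f r := by
  induction M with
  | zero => simp
  | succ M ih => rw [sum_sym_succ, sum_sym_succ, ih, neg_neg]; ring

/-! ### The unit-type Bailey pair -/

lemma pair_term {q : ℂ} (h : Good q) (n r : ℤ) :
    (1 - q ^ (2 * n)) * ((-1) ^ r * q ^ (r ^ 2) * (q ^ r + q ^ (-r)) * iP q (n - r) * iP q (n + r))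
      - q * ((-1) ^ r * q ^ (r ^ 2) * (q ^ r + q ^ (-r)) * iP q (n - 1 - r) * iP q (n - 1 + r)) =
    (-q * q ^ n / (q ^ (r + 1)) ^ 2 - (1 - q) / q ^ (r + 1) - q ^ n) *
      ((-1) ^ (r + 1) * q ^ ((r + 1) ^ 2) * iP q (n - (r + 1)) * iP q (n + (r + 1) - 1)) -
    (-q * q ^ n / (q ^ r) ^ 2 - (1 - q) / q ^ r - q ^ n) *
      ((-1) ^ r * q ^ (r ^ 2) * iP q (n - r) * iP q (n + r - 1)) := by
  have hq := h.1
  rw [show n - 1 - r = n - r - 1 by ring, show n - 1 + r = n + r - 1 by ring,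
    show n - (r + 1) = n - r - 1 by ring, show n + (r + 1) - 1 = n + r by ring,
    show (r + 1) ^ 2 = r ^ 2 + r + r + 1 by ring, iP_rec h, iP_rec h]
  simp only [zpow_add₀ hq, zpow_sub₀ hq, zpow_one, zpow_neg,
    zpow_add₀ (show (-1 : ℂ) ≠ 0 by norm_num),
    show q ^ (2 * n) = (q ^ n) ^ 2 by rw [mul_comm, zpow_mul]; norm_cast]
  have hn := zpow_ne_zero n hq
  have hr := zpow_ne_zero r hq
  field_simp
  ring

lemma pair {q : ℂ} (h : Good q) (n M : ℕ) (hM : n ≤ M) :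
    ∑ r ∈ Icc (-(M : ℤ)) M, (-1) ^ r * q ^ (r ^ 2 + r) * iP q (n - r) * iP q (n + r) =
      q ^ n * (qPoch (q ^ 2) (q ^ 2) n)⁻¹ := by
  have hq := h.1
  have h2 : Good (q ^ 2) := h.pow 1
  have sym : ∑ r ∈ Icc (-(M : ℤ)) M,
      (-1) ^ r * q ^ (r ^ 2) * (q ^ r + q ^ (-r)) * iP q (n - r) * iP q (n + r) =
      2 * ∑ r ∈ Icc (-(M : ℤ)) M, (-1) ^ r * q ^ (r ^ 2 + r) * iP q (n - r) * iP q (n + r) := by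
    have := sum_sym_neg (fun r => (-1) ^ r * q ^ (r ^ 2 + r) * iP q (n - r) * iP q (n + r)) M
    rw [two_mul]
    nth_rewrite 2 [← this]
    rw [← sum_add_distrib]
    refine sum_congr rfl fun r _ => ?_
    simp only [neg_sq, sub_neg_eq_add, ← sub_eq_add_neg, zpow_add₀ hq, zpow_sub₀ hq, zpow_neg,
      show ((-1 : ℂ) ^ r)⁻¹ = (-1) ^ r by rw [← inv_zpow]; norm_num]
    field_simp
  suffices hs : ∑ r ∈ Icc (-(M : ℤ)) M,
      (-1) ^ r * q ^ (r ^ 2) * (q ^ r + q ^ (-r)) * iP q (n - r) * iP q (n + r) =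
      2 * (q ^ n * (qPoch (q ^ 2) (q ^ 2) n)⁻¹) by
    rw [sym] at hs
    exact mul_left_cancel₀ two_ne_zero hs
  clear sym
  induction n with
  | zero =>
    rw [sum_eq_single 0]
    · simp [iP_zero, qPoch]; norm_num
    · intro r _ hr
      rcases lt_or_gt_of_ne hr with hr | hr
      · rw [iP_neg q (m := ((0 : ℕ) : ℤ) + r) (by push_cast; omega)]; ring
      · rw [iP_neg q (m := ((0 : ℕ) : ℤ) - r) (by push_cast; omega)]; ring
    · intro hr; simp at hr
  | succ n ih =>
    have ih := ih (by omega)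
    have key := Finset.sum_congr rfl (fun (r : ℤ) (_ : r ∈ Icc (-(M : ℤ)) M) =>
      pair_term h ((n + 1 : ℕ) : ℤ) r)
    have tel := sum_sym_tel (fun r =>
      (-q * q ^ ((n + 1 : ℕ) : ℤ) / (q ^ r) ^ 2 - (1 - q) / q ^ r - q ^ ((n + 1 : ℕ) : ℤ)) *
      ((-1) ^ r * q ^ (r ^ 2) * iP q (((n + 1 : ℕ) : ℤ) - r) * iP q (((n + 1 : ℕ) : ℤ) + r - 1))) M
    rw [iP_neg q (m := ((n + 1 : ℕ) : ℤ) - (M + 1)) (by omega),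
      iP_neg q (m := ((n + 1 : ℕ) : ℤ) + -M - 1) (by omega)] at tel
    rw [tel, sum_sub_distrib, ← mul_sum, ← mul_sum,
      show ((n + 1 : ℕ) : ℤ) - 1 = n by push_cast; ring, ih] at key
    have n1 : 1 - q ^ (2 * ((n + 1 : ℕ) : ℤ)) ≠ 0 := h.zpow_ne (by omega)
    apply mul_left_cancel₀ n1
    have e : q ^ (2 * ((n + 1 : ℕ) : ℤ)) = q ^ 2 * (q ^ 2) ^ n := by
      rw [← pow_succ', ← pow_mul]; norm_cast
    rw [e] at key n1 ⊢
    rw [qPoch_succ, mul_inv, pow_succ q n]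
    have n2 := qPoch_ne h2 n
    rw [sub_eq_iff_eq_add.mp key]
    field_simp
    ring

/-! ### Finite Jacobi triple product -/

lemma jtp_term {t z : ℂ} (h : Good (t ^ 2)) (ht : t ≠ 0) (hz : z ≠ 0) (n r : ℤ) :
    (1 - (t ^ 2) ^ (2 * n)) * (1 - (t ^ 2) ^ (2 * n - 1)) *
      ((-1) ^ r * z ^ r * t ^ (r ^ 2) * iP (t ^ 2) (n - r) * iP (t ^ 2) (n + r))
      - (1 - z * t ^ (2 * n - 1)) * (1 - z⁻¹ * t ^ (2 * n - 1)) *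
      ((-1) ^ r * z ^ r * t ^ (r ^ 2) * iP (t ^ 2) (n - 1 - r) * iP (t ^ 2) (n - 1 + r)) =
    (-(t ^ n) ^ 2 * (1 - t ^ (2 * n - 1) / z) / (t ^ (r + 1)) ^ 2 -
      (t ^ n) ^ 2 / (z * t) * (1 - z * t ^ (2 * n - 1))) * ((-1) ^ (r + 1) * z ^ (r + 1) *
      t ^ ((r + 1) ^ 2) * iP (t ^ 2) (n - (r + 1)) * iP (t ^ 2) (n + (r + 1) - 1)) -
    (-(t ^ n) ^ 2 * (1 - t ^ (2 * n - 1) / z) / (t ^ r) ^ 2 -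
      (t ^ n) ^ 2 / (z * t) * (1 - z * t ^ (2 * n - 1))) * ((-1) ^ r * z ^ r *
      t ^ (r ^ 2) * iP (t ^ 2) (n - r) * iP (t ^ 2) (n + r - 1)) := by
  rw [show n - 1 - r = n - r - 1 by ring, show n - 1 + r = n + r - 1 by ring,
    show n - (r + 1) = n - r - 1 by ring, show n + (r + 1) - 1 = n + r by ring,
    show (r + 1) ^ 2 = r ^ 2 + r + r + 1 by ring, iP_rec h, iP_rec h]
  have c2 : ∀ m : ℤ, (t ^ 2) ^ m = (t ^ m) ^ 2 := fun m => by
    rw [← zpow_natCast, ← zpow_natCast, zpow_comm]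
  simp only [c2, zpow_add₀ ht, zpow_sub₀ ht, zpow_one, zpow_add₀ hz,
    zpow_add₀ (show (-1 : ℂ) ≠ 0 by norm_num),
    show t ^ (2 * n) = (t ^ n) ^ 2 by rw [mul_comm, zpow_mul]; norm_cast]
  have hn := zpow_ne_zero n ht
  have hr := zpow_ne_zero r ht
  field_simp
  ring

lemma jtp {t z : ℂ} (h : Good (t ^ 2)) (ht : t ≠ 0) (hz : z ≠ 0) (n M : ℕ) (hM : n ≤ M) :
    ∑ r ∈ Icc (-(M : ℤ)) M, (-1) ^ r * z ^ r * t ^ (r ^ 2) * iP (t ^ 2) (n - r) *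
      iP (t ^ 2) (n + r) =
      qPoch (z * t) (t ^ 2) n * qPoch (z⁻¹ * t) (t ^ 2) n * (qPoch (t ^ 2) (t ^ 2) (2 * n))⁻¹ := by
  induction n with
  | zero =>
    rw [sum_eq_single 0]
    · simp [iP_zero, qPoch]
    · intro r _ hr
      rcases lt_or_gt_of_ne hr with hr | hr
      · rw [iP_neg _ (m := ((0 : ℕ) : ℤ) + r) (by push_cast; omega)]; ring
      · rw [iP_neg _ (m := ((0 : ℕ) : ℤ) - r) (by push_cast; omega)]; ring
    · intro hr; simp at hr
  | succ n ih =>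
    have ih := ih (by omega)
    have key := Finset.sum_congr rfl (fun (r : ℤ) (_ : r ∈ Icc (-(M : ℤ)) M) =>
      jtp_term h ht hz ((n + 1 : ℕ) : ℤ) r)
    have tel := sum_sym_tel (fun r =>
      (-(t ^ ((n + 1 : ℕ) : ℤ)) ^ 2 * (1 - t ^ (2 * ((n + 1 : ℕ) : ℤ) - 1) / z) / (t ^ r) ^ 2 -
      (t ^ ((n + 1 : ℕ) : ℤ)) ^ 2 / (z * t) * (1 - z * t ^ (2 * ((n + 1 : ℕ) : ℤ) - 1))) *
      ((-1) ^ r * z ^ r * t ^ (r ^ 2) * iP (t ^ 2) (((n + 1 : ℕ) : ℤ) - r) *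
        iP (t ^ 2) (((n + 1 : ℕ) : ℤ) + r - 1))) M
    rw [iP_neg _ (m := ((n + 1 : ℕ) : ℤ) - (M + 1)) (by omega),
      iP_neg _ (m := ((n + 1 : ℕ) : ℤ) + -M - 1) (by omega)] at tel
    rw [tel, sum_sub_distrib, ← mul_sum, ← mul_sum,
      show ((n + 1 : ℕ) : ℤ) - 1 = n by push_cast; ring, ih] at key
    have n1 : 1 - (t ^ 2) ^ (2 * ((n + 1 : ℕ) : ℤ)) ≠ 0 := h.zpow_ne (by omega)
    have n2 : 1 - (t ^ 2) ^ (2 * ((n + 1 : ℕ) : ℤ) - 1) ≠ 0 := h.zpow_ne (by omega)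
    apply mul_left_cancel₀ (mul_ne_zero n1 n2)
    have e1 : (t ^ 2) ^ (2 * ((n + 1 : ℕ) : ℤ)) = t ^ 2 * (t ^ 2) ^ (2 * n + 1) := by
      rw [← pow_succ']; norm_cast
    have e2 : (t ^ 2) ^ (2 * ((n + 1 : ℕ) : ℤ) - 1) = t ^ 2 * (t ^ 2) ^ (2 * n) := by
      rw [← pow_succ', ← zpow_natCast (t ^ 2) (2 * n + 1)]; congr 1; push_cast; ring
    have e3 : t ^ (2 * ((n + 1 : ℕ) : ℤ) - 1) = t * (t ^ 2) ^ n := by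
      rw [← pow_mul, ← pow_succ', ← zpow_natCast]; congr 1; push_cast; ring
    rw [e1, e2, e3] at key
    rw [e1] at n1 ⊢
    rw [e2] at n2 ⊢
    have n3 := qPoch_ne h (2 * n)
    rw [sub_eq_iff_eq_add.mp key, show 2 * (n + 1) = 2 * n + 1 + 1 by ring, qPoch_succ, qPoch_succ,
      qPoch_succ, qPoch_succ]
    field_simp
    ring

/-! ### Finite form of the identity -/

lemma finite_identity {q : ℂ} (h : Good q) (N : ℕ) :
    ∑ n ∈ range (N + 1), ∑ k ∈ range (N + 1),
      (q ^ 3) ^ ((n : ℤ) ^ 2) * iP (q ^ 3) (N - n) * (qPoch (q ^ 3) (q ^ 3) (2 * n))⁻¹ *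
        (qPoch q q (3 * n - k) * q ^ ((k : ℤ) ^ 2) * iP (q ^ 3) (n - k) *
          (q ^ k * (qPoch (q ^ 2) (q ^ 2) k)⁻¹)) =
    ∑ r ∈ Icc (-(N : ℤ)) N, (-1) ^ r * q ^ (5 * r ^ 2 + r) * iP (q ^ 3) (N - r) *
      iP (q ^ 3) (N + r) := by
  have hq := h.1
  have h3 : Good (q ^ 3) := h.pow 2
  have s1 : ∀ n ∈ range (N + 1), ∑ k ∈ range (N + 1),
      (q ^ 3) ^ ((n : ℤ) ^ 2) * iP (q ^ 3) (N - n) * (qPoch (q ^ 3) (q ^ 3) (2 * n))⁻¹ *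
        (qPoch q q (3 * n - k) * q ^ ((k : ℤ) ^ 2) * iP (q ^ 3) (n - k) *
          (q ^ k * (qPoch (q ^ 2) (q ^ 2) k)⁻¹)) =
      ∑ r ∈ Icc (-(N : ℤ)) N, (-1) ^ r * q ^ (2 * r ^ 2 + r) *
        ((q ^ 3) ^ ((n : ℤ) ^ 2) * iP (q ^ 3) (N - n) * iP (q ^ 3) (n - r) *
          iP (q ^ 3) (n + r)) := by
    intro n hn
    have hnN : n ≤ N := by simpa [Nat.lt_succ_iff] using hn
    have s2 : ∀ k ∈ range (N + 1), (q ^ 3) ^ ((n : ℤ) ^ 2) * iP (q ^ 3) (N - n) *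
        (qPoch (q ^ 3) (q ^ 3) (2 * n))⁻¹ *
        (qPoch q q (3 * n - k) * q ^ ((k : ℤ) ^ 2) * iP (q ^ 3) (n - k) *
          (q ^ k * (qPoch (q ^ 2) (q ^ 2) k)⁻¹)) =
        ∑ r ∈ Icc (-(N : ℤ)) N, (q ^ 3) ^ ((n : ℤ) ^ 2) * iP (q ^ 3) (N - n) *
        (qPoch (q ^ 3) (q ^ 3) (2 * n))⁻¹ * ((-1) ^ r * q ^ (r ^ 2 + r)) *
        (qPoch q q (3 * n - k) * q ^ ((k : ℤ) ^ 2) * iP (q ^ 3) (n - k) * iP q (k - r) *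
          iP q (k + r)) := by
      intro k hk
      rw [← pair h k N (by simpa [Nat.lt_succ_iff] using hk), mul_sum, mul_sum]
      exact sum_congr rfl fun r _ => by ring
    rw [sum_congr rfl s2, sum_comm]
    refine sum_congr rfl fun r _ => ?_
    rw [← mul_sum, cubic h n N hnN r, show 2 * r ^ 2 + r = r ^ 2 + (r ^ 2 + r) by ring,
      zpow_add₀ hq (r ^ 2) (r ^ 2 + r)]
    have := qPoch_ne h3 (2 * n)
    field_simp
  rw [sum_congr rfl s1, sum_comm]
  refine sum_congr rfl fun r hr => ?_
  rw [← mul_sum, bailey h3 N r (by simp only [mem_Icc] at hr; omega),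
    show 5 * r ^ 2 + r = (2 * r ^ 2 + r) + 3 * r ^ 2 by ring, zpow_add₀ hq (2 * r ^ 2 + r),
    zpow_mul q 3 (r ^ 2), show q ^ (3 : ℤ) = q ^ 3 by norm_cast]
  ring

/-! ### Limits -/

open Filter Topology

lemma summable_aux (x : ℂ) {q : ℂ} (h1 : ‖q‖ < 1) : Summable fun j : ℕ => ‖-(x * q ^ j)‖ := by
  simp only [norm_neg, norm_mul, norm_pow]
  exact (summable_geometric_of_lt_one (norm_nonneg _) h1).mul_left _

lemma tendsto_qPoch (x : ℂ) {q : ℂ} (h1 : ‖q‖ < 1) :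
    Tendsto (fun n => qPoch x q n) atTop (𝓝 (qPochInf x q)) := by
  have := (multipliable_one_add_of_summable (summable_aux x h1)).hasProd.tendsto_prod_nat
  simpa only [← sub_eq_add_neg, qPoch, qPochInf] using this

lemma qPochInf_ne {q : ℂ} (h : Good q) (h1 : ‖q‖ < 1) : qPochInf q q ≠ 0 := by
  have := tprod_one_add_ne_zero_of_summable (f := fun j : ℕ => -(q * q ^ j)) (fun j => by
    rw [← sub_eq_add_neg, ← pow_succ']
    exact sub_ne_zero.mpr (h.2 j).symm) (summable_aux q h1)
  simpa only [← sub_eq_add_neg, qPoch, qPochInf] using this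

lemma bound_of_tendsto {u : ℕ → ℂ} {l : ℂ} (h : Tendsto u atTop (𝓝 l)) :
    ∃ C : ℝ, 0 ≤ C ∧ ∀ n, ‖u n‖ ≤ C := by
  obtain ⟨C, hC⟩ := (Metric.isBounded_range_of_tendsto u h).exists_norm_le
  have : ∀ n, ‖u n‖ ≤ C := fun n => hC _ ⟨n, rfl⟩
  exact ⟨C, (norm_nonneg _).trans (this 0), this⟩

lemma tendsto_inv_qPoch {q : ℂ} (h : Good q) (h1 : ‖q‖ < 1) :
    Tendsto (fun n => (qPoch q q n)⁻¹) atTop (𝓝 (qPochInf q q)⁻¹) :=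
  (tendsto_qPoch q h1).inv₀ (qPochInf_ne h h1)

lemma bound_iP {q : ℂ} (h : Good q) (h1 : ‖q‖ < 1) :
    ∃ C : ℝ, 0 ≤ C ∧ ∀ m, ‖iP q m‖ ≤ C := by
  obtain ⟨C, hC, hb⟩ := bound_of_tendsto (tendsto_inv_qPoch h h1)
  refine ⟨C, hC, fun m => ?_⟩
  rw [iP]
  split_ifs
  · simpa using hC
  · exact hb _

lemma tendsto_iP {q : ℂ} (h : Good q) (h1 : ‖q‖ < 1) (m : ℤ) :
    Tendsto (fun N : ℕ => iP q (N + m)) atTop (𝓝 (qPochInf q q)⁻¹) := by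
  have ht : Tendsto (fun N : ℕ => ((N : ℤ) + m).toNat) atTop atTop := by
    refine tendsto_atTop.mpr fun b => ?_
    filter_upwards [eventually_ge_atTop (b + m.natAbs)] with N hN
    omega
  refine ((tendsto_inv_qPoch h h1).comp ht).congr' ?_
  filter_upwards [eventually_ge_atTop m.natAbs] with N hN
  simp only [Function.comp, iP]
  rw [if_neg (by omega)]

lemma tendsto_two {q : ℂ} (h : Good q) (h1 : ‖q‖ < 1) {c : ℤ → ℂ} (hc : Summable fun r => ‖c r‖) :
    Tendsto (fun N : ℕ => ∑ r ∈ Icc (-(N : ℤ)) N, c r * iP q (N - r) * iP q (N + r)) atTop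
      (𝓝 ((∑' r, c r) * (qPochInf q q)⁻¹ * (qPochInf q q)⁻¹)) := by
  obtain ⟨C, hC, hb⟩ := bound_iP h h1
  have key := tendsto_tsum_of_dominated_convergence (𝓕 := atTop)
    (f := fun (N : ℕ) (r : ℤ) => c r * iP q (N - r) * iP q (N + r))
    (g := fun r => c r * (qPochInf q q)⁻¹ * (qPochInf q q)⁻¹)
    (bound := fun r => ‖c r‖ * C * C) ((hc.mul_right _).mul_right _)
    (fun r => by
      have a := tendsto_iP h h1 (-r)
      simp only [← sub_eq_add_neg] at a
      exact (a.const_mul (c r)).mul (tendsto_iP h h1 r))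
    (Eventually.of_forall fun N r => by
      rw [norm_mul, norm_mul]
      gcongr
      · exact hb _
      · exact hb _)
  rw [tsum_mul_right, tsum_mul_right] at key
  refine key.congr fun N => ?_
  apply tsum_eq_sum
  intro r hr
  simp only [mem_Icc, not_and_or, not_le] at hr
  rcases hr with hr | hr
  · rw [iP_neg q (m := (N : ℤ) + r) (by omega)]; ring
  · rw [iP_neg q (m := (N : ℤ) - r) (by omega)]; ring

lemma summable_c {q : ℂ} (h0 : 0 < ‖q‖) (h1 : ‖q‖ < 1) :
    Summable fun r : ℤ => ‖(-1 : ℂ) ^ r * q ^ (5 * r ^ 2 + r)‖ := by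
  have hg := summable_geometric_of_lt_one (norm_nonneg q) h1
  have hs : Summable fun r : ℤ => ‖q‖ ^ r.natAbs := by
    refine Summable.of_nat_of_neg ?_ ?_
    · simpa using hg
    · simpa using hg
  refine Summable.of_nonneg_of_le (fun _ => norm_nonneg _) (fun r => ?_) hs
  rw [norm_mul, norm_zpow, norm_neg, norm_one, one_zpow, one_mul, norm_zpow, ← zpow_natCast]
  apply zpow_le_zpow_right_of_le_one₀ h0 h1.le
  rcases Int.natAbs_eq r with e | e
  · have : (r.natAbs : ℤ) = r := by omega
    rw [this]; nlinarith
  · have e' : (r.natAbs : ℤ) = -r := by omega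
    have : r ≤ 0 := by omega
    rw [e']
    rcases this.lt_or_eq with h | h
    · nlinarith
    · simp [h]

lemma jtp_inf {q : ℂ} (h0 : 0 < ‖q‖) (h1 : ‖q‖ < 1) :
    ∑' r : ℤ, (-1 : ℂ) ^ r * q ^ (5 * r ^ 2 + r) =
      qPochInf (q ^ 10) (q ^ 10) * qPochInf (q ^ 4) (q ^ 10) * qPochInf (q ^ 6) (q ^ 10) := by
  have h := good_of_norm h0 h1
  have hq := h.1
  have h10 : Good (q ^ 10) := h.pow 9
  have n10 : ‖q ^ 10‖ < 1 := by rw [norm_pow]; exact pow_lt_one₀ (norm_nonneg _) h1 (by norm_num)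
  have lim := tendsto_two h10 n10 (summable_c h0 h1)
  have e : ∀ N : ℕ, ∑ r ∈ Icc (-(N : ℤ)) N, (-1 : ℂ) ^ r * q ^ (5 * r ^ 2 + r) *
      iP (q ^ 10) (N - r) * iP (q ^ 10) (N + r) =
      qPoch (q ^ 6) (q ^ 10) N * qPoch (q ^ 4) (q ^ 10) N *
        (qPoch (q ^ 10) (q ^ 10) (2 * N))⁻¹ := by
    intro N
    have t2 : (q ^ 5) ^ 2 = q ^ 10 := by rw [← pow_mul]
    have := jtp (t := q ^ 5) (z := q) (by rw [t2]; exact h10) (pow_ne_zero _ hq) hq N N le_rfl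
    rw [t2, show q * q ^ 5 = q ^ 6 by ring, show q⁻¹ * q ^ 5 = q ^ 4 by field_simp] at this
    rw [← this]
    refine sum_congr rfl fun r _ => ?_
    rw [zpow_add₀ hq, zpow_mul q 5 (r ^ 2), show q ^ (5 : ℤ) = q ^ 5 by norm_cast]
    ring
  simp only [e] at lim
  have lim2 := ((tendsto_qPoch (q ^ 6) n10).mul (tendsto_qPoch (q ^ 4) n10)).mul
    ((tendsto_inv_qPoch h10 n10).comp (tendsto_id.const_mul_atTop' (show 0 < 2 by norm_num)))
  have := tendsto_nhds_unique lim lim2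
  have ne := qPochInf_ne h10 n10
  field_simp at this
  rw [this]
  ring

/-- The summand. -/
noncomputable def summand (q : ℂ) (n k : ℕ) : ℂ :=
  q ^ (3 * n ^ 2 + k ^ 2 + k) * qPoch q q (3 * n - k) /
        (qPoch (q ^ 3) (q ^ 3) (2 * n) * qPoch (q ^ 3) (q ^ 3) (n - k) *
          qPoch (q ^ 2) (q ^ 2) k)

lemma summable_term {q : ℂ} (h0 : 0 < ‖q‖) (h1 : ‖q‖ < 1) :
    Summable fun p : {p : ℕ × ℕ // p.2 ≤ p.1} => ‖summand q p.1.1 p.1.2‖ := by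
  have h := good_of_norm h0 h1
  have h3 : Good (q ^ 3) := h.pow 2
  have h2 : Good (q ^ 2) := h.pow 1
  have n3 : ‖q ^ 3‖ < 1 := by rw [norm_pow]; exact pow_lt_one₀ (norm_nonneg _) h1 (by norm_num)
  have n2 : ‖q ^ 2‖ < 1 := by rw [norm_pow]; exact pow_lt_one₀ (norm_nonneg _) h1 (by norm_num)
  obtain ⟨A, hA, bA⟩ := bound_of_tendsto (tendsto_qPoch q h1)
  obtain ⟨B, hB, bB⟩ := bound_of_tendsto (tendsto_inv_qPoch h3 n3)
  obtain ⟨D, hD, bD⟩ := bound_of_tendsto (tendsto_inv_qPoch h2 n2)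
  have hg := summable_geometric_of_lt_one (norm_nonneg q) h1
  have hs : Summable fun p : ℕ × ℕ => ‖q‖ ^ p.1 * ‖q‖ ^ p.2 :=
    hg.mul_of_nonneg hg (fun _ => by positivity) (fun _ => by positivity)
  have hs' := (hs.mul_right (A * (B * B * D))).comp_injective
    (Subtype.val_injective (p := fun p : ℕ × ℕ => p.2 ≤ p.1))
  refine Summable.of_nonneg_of_le (fun _ => norm_nonneg _) (fun p => ?_) hs'
  obtain ⟨⟨n, k⟩, hp⟩ := p
  simp only [Function.comp, summand]
  rw [div_eq_mul_inv, mul_inv, mul_inv, mul_assoc]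
  simp only [norm_mul]
  gcongr
  · rw [norm_pow, ← pow_add]
    exact pow_le_pow_of_le_one (norm_nonneg _) h1.le (by nlinarith)
  · exact bA _
  · exact bB _
  · exact bB _
  · exact bD _

lemma tsum_finite {q : ℂ} (h : Good q) (N : ℕ) :
    ∑' p : {p : ℕ × ℕ // p.2 ≤ p.1}, summand q p.1.1 p.1.2 * iP (q ^ 3) (N + -(p.1.1 : ℤ)) =
    ∑ r ∈ Icc (-(N : ℤ)) N, (-1) ^ r * q ^ (5 * r ^ 2 + r) * iP (q ^ 3) (N - r) *
      iP (q ^ 3) (N + r) := by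
  rw [← finite_identity h N, ← sum_product']
  set F : ℕ × ℕ → ℂ := fun p =>
      (q ^ 3) ^ ((p.1 : ℤ) ^ 2) * iP (q ^ 3) (N - p.1) * (qPoch (q ^ 3) (q ^ 3) (2 * p.1))⁻¹ *
        (qPoch q q (3 * p.1 - p.2) * q ^ ((p.2 : ℤ) ^ 2) * iP (q ^ 3) (p.1 - p.2) *
          (q ^ p.2 * (qPoch (q ^ 2) (q ^ 2) p.2)⁻¹)) with hF
  have z1 : ∀ p : ℕ × ℕ, p.1 < p.2 → F p = 0 := by
    intro p hp
    simp only [hF]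
    rw [iP_neg (q ^ 3) (m := (p.1 : ℤ) - p.2) (by omega)]; ring
  have z2 : ∀ p : ℕ × ℕ, N < p.1 → F p = 0 := by
    intro p hp
    simp only [hF]
    rw [iP_neg (q ^ 3) (m := (N : ℤ) - p.1) (by omega)]; ring
  rw [← tsum_eq_sum (L := .unconditional _) (f := F) (s := range (N + 1) ×ˢ range (N + 1))]
  · rw [← tsum_subtype_eq_of_support_subset (f := F) (s := {p : ℕ × ℕ | p.2 ≤ p.1})]
    · refine tsum_congr fun p => ?_
      obtain ⟨⟨n, k⟩, hp⟩ := p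
      change k ≤ n at hp
      simp only [hF, summand]
      rw [show (n : ℤ) - k = (n - k : ℕ) by omega, iP_nat, ← sub_eq_add_neg,
        show (n : ℤ) ^ 2 = (n ^ 2 : ℕ) by push_cast; rfl,
        show (k : ℤ) ^ 2 = (k ^ 2 : ℕ) by push_cast; rfl, zpow_natCast, zpow_natCast, ← pow_mul,
        pow_add, pow_add, div_eq_mul_inv, mul_inv, mul_inv]
      ring
    · intro p hp
      by_contra hlt
      exact hp (z1 p (not_le.mp hlt))
  · intro p hp
    simp only [mem_product, mem_range, not_and_or, not_lt] at hp
    by_cases h1 : N < p.1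
    · exact z2 p h1
    · exact z1 p (by omega)

end Id71

/-- Identity (7.1): the sum runs over pairs of integers `s_1 ≥ s_2 ≥ 0`. -/
theorem identity_7_1 (q : ℂ) (h0 : 0 < ‖q‖) (h1 : ‖q‖ < 1) :
    (∑' p : {p : ℕ × ℕ // p.2 ≤ p.1},
      q ^ (3 * p.1.1 ^ 2 + p.1.2 ^ 2 + p.1.2) * qPoch q q (3 * p.1.1 - p.1.2) /
        (qPoch (q ^ 3) (q ^ 3) (2 * p.1.1) * qPoch (q ^ 3) (q ^ 3) (p.1.1 - p.1.2) *
          qPoch (q ^ 2) (q ^ 2) p.1.2)) =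
      qPochInf (q ^ 10) (q ^ 10) * qPochInf (q ^ 4) (q ^ 10) * qPochInf (q ^ 6) (q ^ 10) /
        qPochInf (q ^ 3) (q ^ 3) := by
  open Id71 Filter Topology in
  have h := good_of_norm h0 h1
  have h3 : Good (q ^ 3) := h.pow 2
  have n3 : ‖q ^ 3‖ < 1 := by rw [norm_pow]; exact pow_lt_one₀ (norm_nonneg _) h1 (by norm_num)
  have ne := qPochInf_ne h3 n3
  obtain ⟨C, hC, hb⟩ := bound_iP h3 n3
  have lim := tendsto_two h3 n3 (summable_c h0 h1)
  have lim2 := tendsto_tsum_of_dominated_convergence (𝓕 := atTop)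
    (f := fun (N : ℕ) (p : {p : ℕ × ℕ // p.2 ≤ p.1}) =>
      summand q p.1.1 p.1.2 * iP (q ^ 3) (N + -(p.1.1 : ℤ)))
    (g := fun p => summand q p.1.1 p.1.2 * (qPochInf (q ^ 3) (q ^ 3))⁻¹)
    (bound := fun p => ‖summand q p.1.1 p.1.2‖ * C) ((summable_term h0 h1).mul_right _)
    (fun p => (tendsto_iP h3 n3 _).const_mul _)
    (Eventually.of_forall fun N p => by
      rw [norm_mul]
      gcongr
      exact hb _)
  simp only [tsum_finite h] at lim2
  have key := tendsto_nhds_unique lim2 lim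
  rw [tsum_mul_right, jtp_inf h0 h1] at key
  change (∑' p : {p : ℕ × ℕ // p.2 ≤ p.1}, summand q p.1.1 p.1.2) = _
  rw [mul_right_cancel₀ (inv_ne_zero ne) key, div_eq_mul_inv]
end
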